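/- For all integers $d \ge 1$ and $n \ge d+2$, $|\bar{\mathcal{S}}_2(n,d)| = \frac{1}{2}d^2 + \frac{3}{2}d$ (equivalently $2\,|\bar{\mathcal{S}}_2(n,d)| = d^2 + 3d$); and for all integers $d \ge 1$ and $n \ge d+3$, $|\bar{\mathcal{S}}_3(n,d)| = \frac{1}{6}d^3 + d^2 + \frac{17}{6}d - 2$ (equivalently $6\,|\bar{\mathcal{S}}_3(n,d)| = d^3 + 6d^2 + 17d - 12$). -/

import Mathlib

/-! Common definitions: signotopes and co-signotopes on `[n] = {1, …, n}` (encoded as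
`Finset.Icc 1 n` in `ℕ`), sign functions are `Finset ℕ → Bool` (`true` = `+`, `false` = `-`)
that vanish (are `-`) away from the relevant subsets. -/

open Classical in
/-- The sign function with `+`-set `S` (and `-` elsewhere). -/
noncomputable def ofPlusSet (S : Set (Finset ℕ)) : Finset ℕ → Bool :=
  fun A => if A ∈ S then true else false

/-- Number of sign changes in a list of signs. -/
def signChanges (l : List Bool) : ℕ :=
  ((l.zip l.tail).filter fun p => p.1 ≠ p.2).length

/-- Number of `+`-subsets of a sign function. -/
noncomputable def plusCount (τ : Finset ℕ → Bool) : ℕ :=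
  {A : Finset ℕ | τ A = true}.ncard

/-- The series of signs `τ (C ∪ {x})` for `x ∈ [n] \ C` in increasing order.
For a `d`-subset `B` with `i`-th smallest element `b`, `series n τ (B.erase b)` is
the `(τ,B,i)`-series. -/
def series (n : ℕ) (τ : Finset ℕ → Bool) (C : Finset ℕ) : List Bool :=
  ((Finset.Icc 1 n \ C).sort (· ≤ ·)).map fun x => τ (insert x C)

/-- An `r`-signotope on `[n]`, encoded as a sign function on all of `Finset ℕ`
which is `-` away from the `r`-subsets of `[n]`. -/
def IsSignotope (n r : ℕ) (σ : Finset ℕ → Bool) : Prop :=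
  (∀ A, σ A = true → A ⊆ Finset.Icc 1 n ∧ A.card = r) ∧
  ∀ X : Finset ℕ, X ⊆ Finset.Icc 1 n → X.card = r + 1 →
    signChanges ((X.sort (· ≤ ·)).map fun x => σ (X.erase x)) ≤ 1

/-- A `d`-co-signotope on `[n]`: every `(τ,B,i)`-series has at most one sign change. -/
def IsCoSignotope (n d : ℕ) (τ : Finset ℕ → Bool) : Prop :=
  (∀ A, τ A = true → A ⊆ Finset.Icc 1 n ∧ A.card = d) ∧
  ∀ B : Finset ℕ, B ⊆ Finset.Icc 1 n → B.card = d → ∀ b ∈ B,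
    signChanges (series n τ (B.erase b)) ≤ 1

/-- `𝒮_p(n,r)`: `r`-signotopes on `[n]` with exactly `p` `+`-signs. -/
noncomputable def sigSet (n r p : ℕ) : Set (Finset ℕ → Bool) :=
  {σ | IsSignotope n r σ ∧ plusCount σ = p}

/-- `𝒮_{≤p}(n,r)`. -/
noncomputable def sigSetLe (n r p : ℕ) : Set (Finset ℕ → Bool) :=
  {σ | IsSignotope n r σ ∧ plusCount σ ≤ p}

/-- `𝒮̄_p(n,d)`: `d`-co-signotopes on `[n]` with exactly `p` `+`-subsets. -/
noncomputable def coSigSet (n d p : ℕ) : Set (Finset ℕ → Bool) :=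
  {τ | IsCoSignotope n d τ ∧ plusCount τ = p}

/-- `𝒮̄_{≤p}(n,d)`. -/
noncomputable def coSigSetLe (n d p : ℕ) : Set (Finset ℕ → Bool) :=
  {τ | IsCoSignotope n d τ ∧ plusCount τ ≤ p}

/-- `σ` and `τ` differ by a single step: `σ⁻¹(+) ⊊ τ⁻¹(+)` and `|τ⁻¹(+)| = |σ⁻¹(+)| + 1`. -/
noncomputable def SingleStep (σ τ : Finset ℕ → Bool) : Prop :=
  {A | σ A = true} ⊂ {A | τ A = true} ∧ plusCount τ = plusCount σ + 1

/-- The higher Bruhat order on `r`-signotopes on `[n]`: reflexive-transitive closure of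
the single step relation. -/
noncomputable def BruhatLe (n r : ℕ) (σ τ : Finset ℕ → Bool) : Prop :=
  Relation.ReflTransGen (fun a b => IsSignotope n r a ∧ IsSignotope n r b ∧ SingleStep a b) σ τ

/-- The complementary higher Bruhat order on `d`-co-signotopes on `[n]`. -/
noncomputable def CoBruhatLe (n d : ℕ) (σ τ : Finset ℕ → Bool) : Prop :=
  Relation.ReflTransGen (fun a b => IsCoSignotope n d a ∧ IsCoSignotope n d b ∧ SingleStep a b) σ τ

/-- Adjacency in the graph `G_{n,d}`: `B' = (B \ {x}) ∪ {y}` with no element of `B \ {x}`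
strictly between `x` and `y`. -/
def GAdj (n d : ℕ) (B B' : Finset ℕ) : Prop :=
  B ⊆ Finset.Icc 1 n ∧ B.card = d ∧ B' ⊆ Finset.Icc 1 n ∧ B'.card = d ∧
  ∃ x ∈ B, ∃ y ∈ Finset.Icc 1 n, y ∉ B ∧ B' = insert y (B.erase x) ∧
    ∀ z ∈ B.erase x, ¬(min x y < z ∧ z < max x y)

/-- The source subset `S_{n,d,i} = {1,…,i} ∪ {n-d+i+1,…,n}`. -/
def sourceSubset (n d i : ℕ) : Finset ℕ :=
  Finset.Icc 1 i ∪ Finset.Icc (n - d + i + 1) n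

/-- Connectivity inside the `+`-subsets of `τ` (the induced subgraph `G_{n,d}[τ]`). -/
def plusConn (n d : ℕ) (τ : Finset ℕ → Bool) : Finset ℕ → Finset ℕ → Prop :=
  Relation.ReflTransGen fun A A' => τ A = true ∧ τ A' = true ∧ GAdj n d A A'

/-- The vertex set `𝒞^τ_i` of the `+`-component of `τ` containing `S_{n,d,i}`
(empty if `S_{n,d,i}` is not a `+`-subset). -/
def comp (n d : ℕ) (τ : Finset ℕ → Bool) (i : ℕ) : Set (Finset ℕ) :=
  {B | τ (sourceSubset n d i) = true ∧ τ B = true ∧ plusConn n d τ (sourceSubset n d i) B}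

/-- The `j`-th smallest element (1-based) of a finite set of naturals. -/
def nthElt (B : Finset ℕ) (j : ℕ) : ℕ := (B.sort (· ≤ ·)).getD (j - 1) 0

/-- `b_j` with the conventions `b_0 = 0` and `b_{d+1} = n+1` (as an integer). -/
def extNth (n d : ℕ) (B : Finset ℕ) (j : ℕ) : ℤ :=
  if j = 0 then 0 else if j ≤ d then (nthElt B j : ℤ) else (n : ℤ) + 1

/-- A series is left-aligned if it starts with `+` and ends with `-`. -/
def LeftAligned (l : List Bool) : Prop :=
  l.head? = some true ∧ l.getLast? = some false

/-- A series is right-aligned if it starts with `-` and ends with `+`. -/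
def RightAligned (l : List Bool) : Prop :=
  l.head? = some false ∧ l.getLast? = some true

/-- `𝒮̄_{p,i}(n,d)`: co-signotopes in `𝒮̄_p(n,d)` whose only nonempty `+`-component
is `𝒞^τ_i` (i.e. every `+`-subset lies in `𝒞^τ_i`). -/
noncomputable def coSigOnly (n d p i : ℕ) : Set (Finset ℕ → Bool) :=
  {τ | IsCoSignotope n d τ ∧ plusCount τ = p ∧ ∀ B, τ B = true → B ∈ comp n d τ i}

/-- `Z(d,i)`: points `(a_1,…,a_d) ∈ ℤ_{>0}^d` (0-indexed in Lean) with `a_j ≥ a_{j-1}`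
for `j ∈ [2,i]` and `a_j ≥ a_{j+1}` for `j ∈ [i+1,d-1]` (1-based indices). -/
def ZSet (d i : ℕ) : Set (Fin d → ℤ) :=
  {a | (∀ j, 0 < a j) ∧
    (∀ j k : Fin d, (j : ℕ) + 1 = (k : ℕ) → (k : ℕ) + 1 ≤ i → a j ≤ a k) ∧
    (∀ j k : Fin d, (j : ℕ) + 1 = (k : ℕ) → i ≤ (j : ℕ) → a k ≤ a j)}

/-- A `(d,i)`-Ferrers diagram with respect to `p`. -/
def IsFerrers (d i p : ℕ) (F : Set (Fin d → ℤ)) : Prop :=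
  F ⊆ ZSet d i ∧ F.ncard = p ∧
  ∀ a ∈ F, ∀ a' ∈ ZSet d i, (∀ j, a' j ≤ a j) → a' ∈ F

/-- The number of `(d,i)`-Ferrers diagrams with respect to `p`. -/
noncomputable def ferrersCount (d i p : ℕ) : ℕ :=
  {F : Set (Fin d → ℤ) | IsFerrers d i p F}.ncard

/-- `f_{n,d,i,j}` (here `j` is the 1-based coordinate index). -/
def fFun (n d i j : ℕ) (x : ℕ) : ℤ :=
  if j ≤ i then (x : ℤ) - j + 1 else ((n : ℤ) - x) - ((d : ℤ) - j) + 1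

/-- `g_{n,d,i}` maps a `d`-subset `B = (b_1 < … < b_d)` to
`(f_{n,d,i,1}(b_1), …, f_{n,d,i,d}(b_d))`. -/
def gMap (n d i : ℕ) (B : Finset ℕ) : Fin d → ℤ :=
  fun k => fFun n d i ((k : ℕ) + 1) (nthElt B ((k : ℕ) + 1))

/-- A sparse composition of `p` of length `d+1`. -/
def IsSparseComposition (d p : ℕ) (c : Fin (d + 1) → ℕ) : Prop :=
  (∑ i, c i) = p ∧
  ∀ i : Fin (d + 1), 1 ≤ (i : ℕ) →
    c i = 0 ∨ c ⟨(i : ℕ) - 1, lt_of_le_of_lt (Nat.sub_le _ _) i.isLt⟩ = 0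

/-- The component `τ_i` of the `+`-component decomposition `Δ(τ)`:
the sign function whose `+`-set is `𝒞^τ_i`. -/
noncomputable def compFun (n d : ℕ) (τ : Finset ℕ → Bool) (i : ℕ) : Finset ℕ → Bool :=
  ofPlusSet (comp n d τ i)

/-- Keep the `i` smallest elements of `B` and shift the others by `ñ - n`
(this is `g⁻¹_{ñ,d,i} ∘ g_{n,d,i}` on `d`-subsets). -/
def gammaSet (n tn i : ℕ) (B : Finset ℕ) : Finset ℕ :=
  ((B.sort (· ≤ ·)).mapIdx fun k x => if k < i then x else x + tn - n).toFinset

/-- The map `h_{n,ñ,d,p,i}` on sign functions. -/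
noncomputable def hFun (n tn i : ℕ) (τ : Finset ℕ → Bool) : Finset ℕ → Bool :=
  ofPlusSet {A | ∃ B, τ B = true ∧ A = gammaSet n tn i B}

open Classical in
/-- `γ_{τ,ñ}(B)`: replace `b_j` by `b_j + ñ - n` whenever the `(τ,B,j)`-series is
right-aligned. -/
noncomputable def gammaFun (n tn : ℕ) (τ : Finset ℕ → Bool) (B : Finset ℕ) : Finset ℕ :=
  B.image fun x => if RightAligned (series n τ (B.erase x)) then x + tn - n else x

/-- The simple bijection `φ_{n,ñ,d,p}` on sign functions. -/
noncomputable def phiFun (n tn : ℕ) (τ : Finset ℕ → Bool) : Finset ℕ → Bool :=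
  ofPlusSet {A | ∃ B, τ B = true ∧ A = gammaFun n tn τ B}

/-! A co-signotope is determined by its family of `+`-subsets, which is aligned: if it contains
`A`, then for every `b ∈ A` it contains all the sets obtained from `A` by exchanging `b` for a
smaller element of the complement, or all those obtained by exchanging `b` for a larger one. Write
`n = d + m`. The complement of `A` has `m` elements, at least as many as there are `+`-subsets, so
if `A` is not one of the sources `{1, …, i} ∪ {i + m + 1, …, d + m}`, counting these sets bounds how
far `A` can be from a source. With at most three `+`-subsets, only three types of families remain:
pairwise non-consecutive sources; pairwise non-consecutive sources together with a set at distance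
one from one of them; a source together with two sets near it, in the shape of Young diagrams with
two boxes. Kaplansky's count `(n + 1 - k).choose k` of the `k`-subsets of `{0, …, n - 1}` without
consecutive elements gives the size of the first two types. -/

lemma signChanges_cons_cons (a b : Bool) (l : List Bool) :
    signChanges (a :: b :: l) = (if a = b then 0 else 1) + signChanges (b :: l) := by
  unfold signChanges
  cases a <;> cases b <;> simp <;> omega

lemma signChanges_cons_eq_zero_iff {a : Bool} {l : List Bool} :
    signChanges (a :: l) = 0 ↔ ∀ x ∈ l, x = a := by
  induction l generalizing a with
  | nil => simp [signChanges]
  | cons b l ih =>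
    rw [signChanges_cons_cons]
    by_cases hab : a = b
    · simp [hab, ih]
    · simp [hab, Ne.symm hab]

lemma signChanges_le_one_iff {l : List Bool} :
    signChanges l ≤ 1 ↔ l.Pairwise (· ≤ ·) ∨ l.Pairwise (· ≥ ·) := by
  induction l with
  | nil => simp [signChanges]
  | cons a l ih =>
    cases l with
    | nil => simp [signChanges]
    | cons b l =>
      rw [signChanges_cons_cons]
      by_cases hab : a = b
      · subst hab
        simp only [if_true, Nat.zero_add, ih, List.pairwise_cons]
        cases a <;> simp
      · have constant_tail : (if a = b then 0 else 1) + signChanges (b :: l) ≤ 1 ↔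
            ∀ x ∈ l, x = b := by
          simp [hab, signChanges_cons_eq_zero_iff]
        have pairwise_of_constant (h : ∀ x ∈ l, x = b) : l.Pairwise (· = ·) :=
          List.pairwise_of_forall_mem_list fun x hx y hy => (h x hx).trans (h y hy).symm
        rw [constant_tail]
        have hb : b = !a := by cases a <;> cases b <;> simp_all
        subst hb
        simp only [List.pairwise_cons, List.mem_cons, forall_eq_or_imp]
        refine ⟨fun h => ?_, ?_⟩
        · have le := (pairwise_of_constant h).imp (S := (· ≤ ·)) le_of_eq
          have ge := (pairwise_of_constant h).imp (S := (· ≥ ·)) ge_of_eq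
          cases a
          · exact .inl ⟨⟨by simp, by simp⟩, fun x hx => (h x hx).ge, le⟩
          · exact .inr ⟨⟨by simp, by simp⟩, fun x hx => (h x hx).le, ge⟩
        · cases a
          · rintro (⟨-, h, -⟩ | ⟨⟨h, -⟩, -⟩)
            · exact fun x hx => le_antisymm (Bool.le_true x) (h x hx)
            · exact absurd h (by decide)
          · rintro (⟨⟨h, -⟩, -⟩ | ⟨-, h, -⟩)
            · exact absurd h (by decide)
            · exact fun x hx => le_antisymm (h x hx) (Bool.false_le x)

lemma pairwise_map_iff_of_pairwise_lt {r : Bool → Bool → Prop} {f : ℕ → Bool} {l : List ℕ}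
    (hl : l.Pairwise (· < ·)) :
    (l.map f).Pairwise r ↔ ∀ x ∈ l, ∀ y ∈ l, x < y → r (f x) (f y) := by
  induction l with
  | nil => simp
  | cons a l ih =>
    simp only [List.map_cons, List.pairwise_cons, List.forall_mem_map] at hl ⊢
    grind

lemma signChanges_map_sort_le_one_iff {s : Finset ℕ} {f : ℕ → Bool} :
    signChanges ((s.sort (· ≤ ·)).map f) ≤ 1 ↔ MonotoneOn f s ∨ AntitoneOn f s := by
  have hs := s.sortedLT_sort.pairwise
  rw [signChanges_le_one_iff, pairwise_map_iff_of_pairwise_lt hs,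
    pairwise_map_iff_of_pairwise_lt hs, monotoneOn_iff_forall_lt, antitoneOn_iff_forall_lt]
  simp only [Finset.mem_sort, ge_iff_le, SetLike.mem_coe]

/-- A family `P` of subsets of `[n]` is aligned if, along every series `x ↦ C ∪ {x}`, its members
occupy an initial or a final segment. These are the families of `+`-subsets of co-signotopes. -/
def IsAligned (n : ℕ) (P : Finset (Finset ℕ)) : Prop :=
  ∀ C : Finset ℕ, MonotoneOn (fun x => insert x C ∈ P) ↑(Finset.Icc 1 n \ C) ∨
    AntitoneOn (fun x => insert x C ∈ P) ↑(Finset.Icc 1 n \ C)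

lemma ofPlusSet_eq_true_iff {S : Set (Finset ℕ)} {A : Finset ℕ} :
    ofPlusSet S A = true ↔ A ∈ S := by
  simp [ofPlusSet]

lemma ofPlusSet_injective : Function.Injective ofPlusSet := fun S T h =>
  Set.ext fun A => by rw [← ofPlusSet_eq_true_iff, h, ofPlusSet_eq_true_iff]

lemma plusCount_ofPlusSet (S : Set (Finset ℕ)) : plusCount (ofPlusSet S) = S.ncard := by
  simp only [plusCount, ofPlusSet_eq_true_iff, Set.ofPred_mem_eq]

lemma isCoSignotope_ofPlusSet_iff {n d : ℕ} {P : Finset (Finset ℕ)} :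
    IsCoSignotope n d (ofPlusSet P) ↔ P ⊆ (Finset.Icc 1 n).powersetCard d ∧ IsAligned n P := by
  have series_iff (C : Finset ℕ) : signChanges (series n (ofPlusSet P) C) ≤ 1 ↔
      MonotoneOn (fun x => insert x C ∈ P) ↑(Finset.Icc 1 n \ C) ∨
        AntitoneOn (fun x => insert x C ∈ P) ↑(Finset.Icc 1 n \ C) := by
    simp only [series, signChanges_map_sort_le_one_iff, MonotoneOn, AntitoneOn, Bool.le_iff_imp,
      ofPlusSet_eq_true_iff, SetLike.mem_coe, le_Prop_eq]
  have subset_iff : P ⊆ (Finset.Icc 1 n).powersetCard d ↔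
      ∀ A ∈ P, A ⊆ Finset.Icc 1 n ∧ A.card = d := by
    simp only [Finset.subset_iff, Finset.mem_powersetCard]
  simp only [IsCoSignotope, ofPlusSet_eq_true_iff, series_iff, SetLike.mem_coe, subset_iff]
  refine and_congr_right fun hP => ⟨fun h C => ?_, fun h B _ _ b _ => h _⟩
  by_cases hC : ∃ x ∈ Finset.Icc 1 n \ C, insert x C ∈ P
  · obtain ⟨x, hx, hxP⟩ := hC
    have aligned := h _ (hP _ hxP).1 (hP _ hxP).2 x (Finset.mem_insert_self x C)
    rwa [Finset.erase_insert (Finset.mem_sdiff.1 hx).2] at aligned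
  · exact .inl fun x hx y _ _ hxP => absurd ⟨x, hx, hxP⟩ hC

/-- The aligned families of `p` many `d`-subsets of `[n]`. -/
noncomputable def coSigFamilies (n d p : ℕ) : Finset (Finset (Finset ℕ)) :=
  open Classical in {P ∈ ((Finset.Icc 1 n).powersetCard d).powersetCard p | IsAligned n P}

lemma mem_coSigFamilies {n d p : ℕ} {P : Finset (Finset ℕ)} :
    P ∈ coSigFamilies n d p ↔
      P ⊆ (Finset.Icc 1 n).powersetCard d ∧ P.card = p ∧ IsAligned n P := by
  simp only [coSigFamilies, Finset.mem_filter, Finset.mem_powersetCard, and_assoc]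

lemma ncard_coSigSet (n d p : ℕ) : (coSigSet n d p).ncard = (coSigFamilies n d p).card := by
  have image_eq : ofPlusSet ∘ (↑) '' (coSigFamilies n d p : Set (Finset (Finset ℕ))) =
      coSigSet n d p := by
    ext τ
    constructor
    · rintro ⟨P, hP, rfl⟩
      obtain ⟨subset, card, aligned⟩ := mem_coSigFamilies.1 hP
      exact ⟨isCoSignotope_ofPlusSet_iff.2 ⟨subset, aligned⟩,
        (plusCount_ofPlusSet _).trans (by rw [Set.ncard_coe_finset, card])⟩
    · rintro ⟨hτ, card⟩
      have finite : {A | τ A = true}.Finite :=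
        ((Finset.Icc 1 n).powersetCard d).finite_toSet.subset fun A hA => by
          simpa [Finset.mem_powersetCard] using hτ.1 A hA
      have eq_τ : ofPlusSet finite.toFinset = τ := by
        ext A
        rw [Bool.eq_iff_iff, ofPlusSet_eq_true_iff]
        simp
      rw [← eq_τ, isCoSignotope_ofPlusSet_iff] at hτ
      refine ⟨finite.toFinset, mem_coSigFamilies.2 ⟨hτ.1, ?_, hτ.2⟩, eq_τ⟩
      rw [← card, plusCount, Set.ncard_eq_toFinset_card _ finite]
  rw [← image_eq, Set.ncard_image_of_injective _ (ofPlusSet_injective.comp Finset.coe_injective),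
    Set.ncard_coe_finset]

/-- The set obtained from `A` by replacing its element `b` with `z`. -/
def exchange (A : Finset ℕ) (b z : ℕ) : Finset ℕ := insert z (A.erase b)

lemma mem_exchange {A : Finset ℕ} {b z x : ℕ} :
    x ∈ exchange A b z ↔ x = z ∨ x ≠ b ∧ x ∈ A := by
  simp [exchange]

lemma exchange_self {A : Finset ℕ} {b : ℕ} (hb : b ∈ A) : exchange A b b = A :=
  Finset.insert_erase hb

lemma exchange_singleton (b z : ℕ) : exchange {b} b z = {z} := by
  rw [exchange, Finset.erase_singleton, insert_empty_eq]

lemma exchange_ne_self {A : Finset ℕ} {b z : ℕ} (hz : z ∉ A) : exchange A b z ≠ A :=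
  fun h => hz (h ▸ mem_exchange.2 (.inl rfl))

lemma exchange_mem_powersetCard {n d : ℕ} {A : Finset ℕ} {b z : ℕ}
    (hA : A ∈ (Finset.Icc 1 n).powersetCard d) (hb : b ∈ A) (hz : z ∈ Finset.Icc 1 n \ A) :
    exchange A b z ∈ (Finset.Icc 1 n).powersetCard d := by
  rw [Finset.mem_powersetCard] at hA ⊢
  rw [Finset.mem_sdiff] at hz
  refine ⟨Finset.insert_subset hz.1 ((A.erase_subset b).trans hA.1), ?_⟩
  rw [exchange, Finset.card_insert_of_notMem fun h => hz.2 (Finset.mem_of_mem_erase h),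
    Finset.card_erase_add_one hb, hA.2]

/-- The moves `(b, z)` available at a subset `A` of `[n]`: the element `b` of `A` may be exchanged
for the element `z` of its complement. -/
def moves (n : ℕ) (A : Finset ℕ) : Finset (ℕ × ℕ) := A ×ˢ (Finset.Icc 1 n \ A)

lemma mem_moves {n : ℕ} {A : Finset ℕ} {b z : ℕ} :
    (b, z) ∈ moves n A ↔ b ∈ A ∧ z ∈ Finset.Icc 1 n \ A := Finset.mem_product

/-- The family consisting of `A` and of the results of the moves in `E` at `A`. -/
def neighborhood (A : Finset ℕ) (E : Finset (ℕ × ℕ)) : Finset (Finset ℕ) :=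
  insert A (E.image fun e => exchange A e.1 e.2)

lemma neighborhood_subset_iff {P : Finset (Finset ℕ)} {A : Finset ℕ} {E : Finset (ℕ × ℕ)} :
    neighborhood A E ⊆ P ↔ A ∈ P ∧ ∀ e ∈ E, exchange A e.1 e.2 ∈ P := by
  rw [neighborhood, Finset.insert_subset_iff, Finset.image_subset_iff]

lemma exchange_injOn (n : ℕ) (A : Finset ℕ) :
    Set.InjOn (fun e : ℕ × ℕ => exchange A e.1 e.2) (moves n A) := by
  rintro ⟨b, z⟩ hbz ⟨b', z'⟩ hbz' h
  rw [Finset.mem_coe, mem_moves, Finset.mem_sdiff] at hbz hbz'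
  have mem_iff (x : ℕ) : (x = z ∨ x ≠ b ∧ x ∈ A) ↔ (x = z' ∨ x ≠ b' ∧ x ∈ A) := by
    rw [← mem_exchange, ← mem_exchange, show exchange A b z = exchange A b' z' from h]
  have := mem_iff b
  have := mem_iff z
  have := mem_iff b'
  grind

lemma card_neighborhood {n : ℕ} {A : Finset ℕ} {E : Finset (ℕ × ℕ)} (hE : E ⊆ moves n A) :
    (neighborhood A E).card = E.card + 1 := by
  rw [neighborhood, Finset.card_insert_of_notMem, Finset.card_image_of_injOn]
  · exact (exchange_injOn n A).mono hE
  · intro h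
    obtain ⟨e, he, h⟩ := Finset.mem_image.1 h
    exact exchange_ne_self (Finset.mem_sdiff.1 (mem_moves.1 (hE he)).2).2 h

lemma exchange_mem_neighborhood_iff {n : ℕ} {A : Finset ℕ} {E : Finset (ℕ × ℕ)} {e : ℕ × ℕ}
    (hE : E ⊆ moves n A) (he : e ∈ moves n A) :
    exchange A e.1 e.2 ∈ neighborhood A E ↔ e ∈ E := by
  rw [neighborhood, Finset.mem_insert, Finset.mem_image]
  constructor
  · rintro (h | ⟨e', he', h⟩)
    · exact absurd h (exchange_ne_self (Finset.mem_sdiff.1 (mem_moves.1 he).2).2)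
    · rwa [← exchange_injOn n A (hE he') he h]
  · exact fun he => .inr ⟨e, he, rfl⟩

lemma neighborhood_injOn (n : ℕ) (A : Finset ℕ) :
    Set.InjOn (neighborhood A) {E | E ⊆ moves n A} := by
  intro E hE E' hE' h
  have mem_iff {e : ℕ × ℕ} (he : e ∈ moves n A) : e ∈ E ↔ e ∈ E' := by
    rw [← exchange_mem_neighborhood_iff hE he, h, exchange_mem_neighborhood_iff hE' he]
  ext e
  exact ⟨fun he => (mem_iff (hE he)).1 he, fun he => (mem_iff (hE' he)).2 he⟩

lemma card_lt_of_exchange_mem {n : ℕ} {P : Finset (Finset ℕ)} {A : Finset ℕ} (hA : A ∈ P)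
    {E : Finset (ℕ × ℕ)} (hE : E ⊆ moves n A) (hEP : ∀ e ∈ E, exchange A e.1 e.2 ∈ P) :
    E.card < P.card := by
  have le := Finset.card_le_card (neighborhood_subset_iff.2 ⟨hA, hEP⟩)
  rw [card_neighborhood hE] at le
  exact le

lemma IsAligned.exchange_mem {n : ℕ} {P : Finset (Finset ℕ)} (hP : IsAligned n P)
    {A : Finset ℕ} (hA : A ∈ P) {b : ℕ} (hb : b ∈ A) (hbn : b ∈ Finset.Icc 1 n) :
    (∀ z ∈ Finset.Icc 1 n \ A, z < b → exchange A b z ∈ P) ∨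
      (∀ z ∈ Finset.Icc 1 n \ A, b < z → exchange A b z ∈ P) := by
  have hbC : b ∈ (↑(Finset.Icc 1 n \ A.erase b) : Set ℕ) := by simpa using hbn
  have hzC {z : ℕ} (hz : z ∈ Finset.Icc 1 n \ A) :
      z ∈ (↑(Finset.Icc 1 n \ A.erase b) : Set ℕ) :=
    Finset.sdiff_subset_sdiff le_rfl (A.erase_subset b) hz
  have hAC : exchange A b b ∈ P := by rwa [exchange_self hb]
  rcases hP (A.erase b) with mono | anti
  · exact .inr fun z hz hbz => mono hbC (hzC hz) hbz.le hAC
  · exact .inl fun z hz hzb => anti (hzC hz) hbC hzb.le hAC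

lemma isAligned_empty (n : ℕ) : IsAligned n ∅ :=
  fun _ => .inl fun _ _ _ _ _ h => absurd h (Finset.notMem_empty _)

lemma isAligned_insert {n : ℕ} {P : Finset (Finset ℕ)} (hP : IsAligned n P) {A : Finset ℕ}
    (hA : ∀ b ∈ A, (∀ z ∈ Finset.Icc 1 n \ A, exchange A b z ∈ P ↔ z < b) ∨
      (∀ z ∈ Finset.Icc 1 n \ A, exchange A b z ∈ P ↔ b < z)) :
    IsAligned n (insert A P) := by
  intro C
  by_cases hC : ∃ b ∈ Finset.Icc 1 n \ C, insert b C = A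
  · obtain ⟨b, hb, rfl⟩ := hC
    have hbC : b ∉ C := (Finset.mem_sdiff.1 hb).2
    have exchange_eq (z : ℕ) : exchange (insert b C) b z = insert z C := by
      rw [exchange, Finset.erase_insert hbC]
    have mem_of_ne {z : ℕ} (hz : z ∈ Finset.Icc 1 n \ C) (hzb : z ≠ b) :
        z ∈ Finset.Icc 1 n \ insert b C ∧
          (insert z C ∈ insert (insert b C) P ↔ insert z C ∈ P) := by
      have hzC : z ∉ insert b C := by simpa [hzb] using (Finset.mem_sdiff.1 hz).2
      refine ⟨Finset.mem_sdiff.2 ⟨(Finset.mem_sdiff.1 hz).1, hzC⟩, ?_⟩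
      have ne : insert z C ≠ insert b C := fun h => hzC (h ▸ Finset.mem_insert_self z C)
      rw [Finset.mem_insert, or_iff_right ne]
    have hbA := hA b (Finset.mem_insert_self b C)
    simp only [exchange_eq] at hbA
    rcases hbA with left | right
    · have mem_iff {z : ℕ} (hz : z ∈ Finset.Icc 1 n \ C) :
          insert z C ∈ insert (insert b C) P ↔ z ≤ b := by
        rcases eq_or_ne z b with rfl | hzb
        · simp
        · rw [(mem_of_ne hz hzb).2, left z (mem_of_ne hz hzb).1, hzb.le_iff_lt]
      exact .inr fun x hx y hy hxy h => (mem_iff hx).2 (hxy.trans ((mem_iff hy).1 h))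
    · have mem_iff {z : ℕ} (hz : z ∈ Finset.Icc 1 n \ C) :
          insert z C ∈ insert (insert b C) P ↔ b ≤ z := by
        rcases eq_or_ne z b with rfl | hzb
        · simp
        · rw [(mem_of_ne hz hzb).2, right z (mem_of_ne hz hzb).1, hzb.symm.le_iff_lt]
      exact .inl fun x hx y hy hxy h => (mem_iff hy).2 (((mem_iff hx).1 h).trans hxy)
  · have mem_iff {z : ℕ} (hz : z ∈ Finset.Icc 1 n \ C) :
        insert z C ∈ insert A P ↔ insert z C ∈ P := by
      rw [Finset.mem_insert, or_iff_right fun h => hC ⟨z, hz, h⟩]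
    refine (hP C).imp (fun mono x hx y hy hxy h => ?_) (fun anti x hx y hy hxy h => ?_)
    · exact (mem_iff hy).2 (mono hx hy hxy ((mem_iff hx).1 h))
    · exact (mem_iff hx).2 (anti hx hy hxy ((mem_iff hy).1 h))

lemma mem_sourceSubset {d m i x : ℕ} :
    x ∈ sourceSubset (d + m) d i ↔ 1 ≤ x ∧ x ≤ i ∨ i + m < x ∧ x ≤ d + m := by
  simp only [sourceSubset, Finset.mem_union, Finset.mem_Icc]
  omega

lemma sourceSubset_mem_powersetCard {d m i : ℕ} (hi : i ≤ d) :
    sourceSubset (d + m) d i ∈ (Finset.Icc 1 (d + m)).powersetCard d := by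
  refine Finset.mem_powersetCard.2 ⟨fun x hx => ?_, ?_⟩
  · rw [mem_sourceSubset] at hx
    exact Finset.mem_Icc.2 (by omega)
  · rw [sourceSubset, Finset.card_union_of_disjoint, Nat.card_Icc, Nat.card_Icc]
    · omega
    · exact Finset.disjoint_left.2 fun x hx hx' => by
        rw [Finset.mem_Icc] at hx hx'
        omega

lemma sourceSubset_injOn {d m : ℕ} (hm : 1 ≤ m) :
    Set.InjOn (sourceSubset (d + m) d) (Finset.range (d + 1)) := by
  intro i hi j hj h
  simp only [Finset.mem_coe, Finset.mem_range] at hi hj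
  have mem_iff (x : ℕ) : x ∈ sourceSubset (d + m) d i ↔ x ∈ sourceSubset (d + m) d j := by rw [h]
  simp only [mem_sourceSubset] at mem_iff
  have := mem_iff (i + 1)
  have := mem_iff (j + 1)
  omega

/-- The moves at the `i`-th source that slide an end of one of its two blocks into the gap
`{i + 1, …, i + m}` by a single step. -/
def boxMoves (d m i : ℕ) : Finset (ℕ × ℕ) :=
  {(i, i + 1), (i + m + 1, i + m)} ∩ moves (d + m) (sourceSubset (d + m) d i)

/-- The pairs of moves at the `i`-th source that lead to an aligned family of three sets. A move
sliding the block `{1, …, i}` into the gap corresponds to a box of a Young diagram, and so does a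
move sliding the other block; the five pairs are the pairs of Young diagrams with two boxes. -/
def clusterMoves (d m i : ℕ) : Finset (Finset (ℕ × ℕ)) :=
  {E ∈ {{(i, i + 1), (i + m + 1, i + m)}, {(i, i + 1), (i, i + 2)}, {(i, i + 1), (i - 1, i + 1)},
      {(i + m + 1, i + m), (i + m + 1, i + m - 1)}, {(i + m + 1, i + m), (i + m + 2, i + m)}} |
    E ⊆ moves (d + m) (sourceSubset (d + m) d i)}

lemma mem_moves_sourceSubset {d m i b z : ℕ} (hi : i ≤ d) :
    (b, z) ∈ moves (d + m) (sourceSubset (d + m) d i) ↔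
      (1 ≤ b ∧ b ≤ i ∨ i + m < b ∧ b ≤ d + m) ∧ i < z ∧ z ≤ i + m := by
  rw [mem_moves, Finset.mem_sdiff, Finset.mem_Icc, mem_sourceSubset, mem_sourceSubset]
  omega

lemma mem_boxMoves {d m i b z : ℕ} (hi : i ≤ d) : (b, z) ∈ boxMoves d m i ↔
    b = i ∧ z = i + 1 ∧ 1 ≤ i ∧ 1 ≤ m ∨ b = i + m + 1 ∧ z = i + m ∧ i < d ∧ 1 ≤ m := by
  simp only [boxMoves, Finset.mem_inter, Finset.mem_insert, Finset.mem_singleton, Prod.mk.injEq,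
    mem_moves_sourceSubset hi]
  omega

/-- The `k`-subsets of `{0, …, n - 1}` without two consecutive elements. -/
def sparseSubsets (n k : ℕ) : Finset (Finset ℕ) :=
  {T ∈ (Finset.range n).powersetCard k | ∀ i ∈ T, i + 1 ∉ T}

lemma mem_sparseSubsets {n k : ℕ} {T : Finset ℕ} :
    T ∈ sparseSubsets n k ↔ (T ⊆ Finset.range n ∧ T.card = k) ∧ ∀ i ∈ T, i + 1 ∉ T := by
  rw [sparseSubsets, Finset.mem_filter, Finset.mem_powersetCard]

lemma le_of_mem_sparseSubsets {d k i : ℕ} {T : Finset ℕ} (hT : T ∈ sparseSubsets (d + 1) k)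
    (hi : i ∈ T) : i ≤ d :=
  Finset.mem_range_succ_iff.1 ((mem_sparseSubsets.1 hT).1.1 hi)

lemma lt_or_lt_of_mem_sparseSubsets {n k i j : ℕ} {T : Finset ℕ} (hT : T ∈ sparseSubsets n k)
    (hi : i ∈ T) (hj : j ∈ T) (ne : i ≠ j) : i + 1 < j ∨ j + 1 < i := by
  have hij : i + 1 ≠ j := fun h => (mem_sparseSubsets.1 hT).2 i hi (h ▸ hj)
  have hji : j + 1 ≠ i := fun h => (mem_sparseSubsets.1 hT).2 j hj (h ▸ hi)
  omega

/-- The families of `p` pairwise non-consecutive sources. -/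
def sourceFamilies (d m p : ℕ) : Finset (Finset (Finset ℕ)) :=
  (sparseSubsets (d + 1) p).image fun T => T.image (sourceSubset (d + m) d)

/-- The results of the box moves at the sources with index in `T`. -/
def boxes (d m : ℕ) (T : Finset ℕ) : Finset (Finset ℕ) :=
  T.biUnion fun i =>
    (boxMoves d m i).image fun e => exchange (sourceSubset (d + m) d i) e.1 e.2

lemma mem_boxes {d m : ℕ} {T : Finset ℕ} {B : Finset ℕ} : B ∈ boxes d m T ↔
    ∃ i ∈ T, ∃ b z, (b, z) ∈ boxMoves d m i ∧ exchange (sourceSubset (d + m) d i) b z = B := by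
  simp only [boxes, Finset.mem_biUnion, Finset.mem_image, Prod.exists]

/-- The families of `p` pairwise non-consecutive sources together with the result of one box move
at one of them. -/
def boxFamilies (d m p : ℕ) : Finset (Finset (Finset ℕ)) :=
  ((sparseSubsets (d + 1) p).sigma (boxes d m)).image fun x =>
    insert x.2 (x.1.image (sourceSubset (d + m) d))

/-- The families of three sets formed by a source and two moves at it. -/
def clusterFamilies (d m : ℕ) : Finset (Finset (Finset ℕ)) :=
  ((Finset.range (d + 1)).sigma (clusterMoves d m)).image fun x =>
    neighborhood (sourceSubset (d + m) d x.1) x.2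

/-- The indices of the sources that belong to `P`. -/
def sourceIndices (d m : ℕ) (P : Finset (Finset ℕ)) : Finset ℕ :=
  {i ∈ Finset.range (d + 1) | sourceSubset (d + m) d i ∈ P}

lemma mem_sourceIndices {d m i : ℕ} {P : Finset (Finset ℕ)} :
    i ∈ sourceIndices d m P ↔ i ≤ d ∧ sourceSubset (d + m) d i ∈ P := by
  rw [sourceIndices, Finset.mem_filter, Finset.mem_range, Nat.lt_succ_iff]

/-- The subset of `[n]` that contains everything outside the interval `{lo, …, hi}` and whose
elements inside it are those of `M`. -/
def window (n lo hi : ℕ) (M : Finset ℕ) : Finset ℕ := (Finset.Icc 1 n \ Finset.Icc lo hi) ∪ M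

lemma mem_window {n lo hi x : ℕ} {M : Finset ℕ} :
    x ∈ window n lo hi M ↔ (1 ≤ x ∧ x ≤ n) ∧ ¬(lo ≤ x ∧ x ≤ hi) ∨ x ∈ M := by
  simp only [window, Finset.mem_union, Finset.mem_sdiff, Finset.mem_Icc]

lemma exists_eq_window {n m : ℕ} (hm : 1 ≤ m) {A : Finset ℕ}
    (hA : A ⊆ Finset.Icc 1 n) (card : A.card + m = n) :
    ∃ lo hi M, 1 ≤ lo ∧ hi ≤ n ∧ M ⊆ Finset.Ioo lo hi ∧
      hi + 1 = lo + m + M.card ∧ A = window n lo hi M := by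
  have card_gap : (Finset.Icc 1 n \ A).card = m := by
    rw [Finset.card_sdiff_of_subset hA, Nat.card_Icc]; omega
  have nonempty : (Finset.Icc 1 n \ A).Nonempty := Finset.card_pos.1 (by omega)
  obtain ⟨lo, lo_mem, lo_le⟩ := Finset.exists_min_image _ id nonempty
  obtain ⟨hi, hi_mem, le_hi⟩ := Finset.exists_max_image _ id nonempty
  simp only [Finset.mem_sdiff, Finset.mem_Icc, id] at lo_mem lo_le hi_mem le_hi
  have lo_le_hi := lo_le hi hi_mem
  have eq_union : A = window n lo hi (A ∩ Finset.Ioo lo hi) := by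
    ext x
    have := @hA x
    have := lo_le x
    have := le_hi x
    simp only [mem_window, Finset.mem_inter, Finset.mem_Icc, Finset.mem_Ioo] at *
    grind
  refine ⟨lo, hi, A ∩ Finset.Ioo lo hi, lo_mem.1.1, hi_mem.1.2, Finset.inter_subset_right, ?_,
    eq_union⟩
  have disjoint : Disjoint (Finset.Icc 1 n \ Finset.Icc lo hi) (A ∩ Finset.Ioo lo hi) :=
    Finset.sdiff_disjoint.mono_right (Finset.inter_subset_right.trans Finset.Ioo_subset_Icc_self)
  have card_eq := congrArg Finset.card eq_union
  rw [window, Finset.card_union_of_disjoint disjoint, Finset.card_sdiff_of_subset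
    (Finset.Icc_subset_Icc lo_mem.1.1 hi_mem.1.2), Nat.card_Icc, Nat.card_Icc] at card_eq
  omega

lemma exchange_window {n lo hi b z : ℕ} {M : Finset ℕ} (hM : M ⊆ Finset.Icc lo hi) (hb : b ∈ M) :
    exchange (window n lo hi M) b z = window n lo hi (exchange M b z) := by
  have hb := Finset.mem_Icc.1 (hM hb)
  ext x
  simp only [mem_window, mem_exchange]
  grind

lemma mem_moves_window {n lo hi b z : ℕ} {M : Finset ℕ} (hlo : 1 ≤ lo) (hhi : hi ≤ n) (hb : b ∈ M)
    (hz : z ∈ Finset.Icc lo hi \ M) : (b, z) ∈ moves n (window n lo hi M) := by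
  simp only [mem_moves, Finset.mem_sdiff, mem_window, Finset.mem_Icc] at hz ⊢
  grind

lemma card_lt_of_window_mem {n lo hi : ℕ} {M : Finset ℕ} {P : Finset (Finset ℕ)} (hlo : 1 ≤ lo)
    (hhi : hi ≤ n) (hM : M ⊆ Finset.Icc lo hi) (mem : window n lo hi M ∈ P) {E : Finset (ℕ × ℕ)}
    (hE : E ⊆ M ×ˢ (Finset.Icc lo hi \ M))
    (hEP : ∀ e ∈ E, window n lo hi (exchange M e.1 e.2) ∈ P) : E.card < P.card := by
  refine card_lt_of_exchange_mem (n := n) mem (fun e he => ?_) fun e he => ?_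
  · exact mem_moves_window hlo hhi (Finset.mem_product.1 (hE he)).1 (Finset.mem_product.1 (hE he)).2
  · rw [exchange_window hM (Finset.mem_product.1 (hE he)).1]
    exact hEP e he

lemma IsAligned.window_mem {n lo hi b : ℕ} {M : Finset ℕ} {P : Finset (Finset ℕ)}
    (hP : IsAligned n P) (hlo : 1 ≤ lo) (hhi : hi ≤ n) (hM : M ⊆ Finset.Icc lo hi) (hb : b ∈ M)
    (mem : window n lo hi M ∈ P) :
    (∀ z ∈ Finset.Icc lo hi \ M, z < b → window n lo hi (exchange M b z) ∈ P) ∨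
      (∀ z ∈ Finset.Icc lo hi \ M, b < z → window n lo hi (exchange M b z) ∈ P) := by
  simp only [← exchange_window hM hb]
  have mem_sdiff (z : ℕ) (hz : z ∈ Finset.Icc lo hi \ M) :=
    (mem_moves.1 (mem_moves_window hlo hhi hb hz)).2
  have hbn : b ∈ Finset.Icc 1 n := Finset.Icc_subset_Icc hlo hhi (hM hb)
  exact (hP.exchange_mem mem (mem_window.2 (.inr hb)) hbn).imp
    (fun left z hz => left z (mem_sdiff z hz)) (fun right z hz => right z (mem_sdiff z hz))

lemma card_lt_card_of_window_mem {n lo hi : ℕ} {M : Finset ℕ} {P : Finset (Finset ℕ)}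
    (hP : IsAligned n P) (hlo : 1 ≤ lo) (hhi : hi ≤ n) (hM : M ⊆ Finset.Ioo lo hi)
    (mem : window n lo hi M ∈ P) : M.card < P.card := by
  have hM' : M ⊆ Finset.Icc lo hi := hM.trans Finset.Ioo_subset_Icc_self
  have mem_Ioo {x : ℕ} (hx : x ∈ M) := Finset.mem_Ioo.1 (hM hx)
  have exists_move (b : ℕ) (hb : b ∈ M) : ∃ z, z ∈ Finset.Icc lo hi \ M ∧
      window n lo hi (exchange M b z) ∈ P := by
    have lo_le_hi : lo ≤ hi := ((mem_Ioo hb).1.trans (mem_Ioo hb).2).le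
    have lo_mem : lo ∈ Finset.Icc lo hi \ M :=
      Finset.mem_sdiff.2 ⟨Finset.left_mem_Icc.2 lo_le_hi, fun h => (mem_Ioo h).1.false⟩
    have hi_mem : hi ∈ Finset.Icc lo hi \ M :=
      Finset.mem_sdiff.2 ⟨Finset.right_mem_Icc.2 lo_le_hi, fun h => (mem_Ioo h).2.false⟩
    rcases hP.window_mem hlo hhi hM' hb mem with left | right
    · exact ⟨lo, lo_mem, left lo lo_mem (mem_Ioo hb).1⟩
    · exact ⟨hi, hi_mem, right hi hi_mem (mem_Ioo hb).2⟩
  choose! z hz using exists_move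
  have lt := card_lt_of_window_mem hlo hhi hM' mem (E := M.image fun b => (b, z b))
    (Finset.image_subset_iff.2 fun b hb => Finset.mem_product.2 ⟨hb, (hz b hb).1⟩)
    (Finset.forall_mem_image.2 fun b hb => (hz b hb).2)
  rwa [Finset.card_image_of_injective _ fun b b' h => (Prod.ext_iff.1 h).1] at lt

lemma card_of_mem_clusterMoves {d m i : ℕ} (hm : 1 ≤ m) {E : Finset (ℕ × ℕ)}
    (hE : E ∈ clusterMoves d m i) : E.card = 2 := by
  obtain ⟨hE, legal⟩ := Finset.mem_filter.1 hE
  simp only [Finset.mem_insert, Finset.mem_singleton] at hE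
  rcases hE with rfl | rfl | rfl | rfl | rfl
  case inr.inr.inl =>
    have hi : i ∈ sourceSubset (d + m) d i :=
      (mem_moves.1 (legal (Finset.mem_insert_self (i, i + 1) _))).1
    rw [mem_sourceSubset] at hi
    exact Finset.card_pair fun h => by rw [Prod.mk.injEq] at h; omega
  all_goals exact Finset.card_pair fun h => by rw [Prod.mk.injEq] at h; omega

lemma mem_clusterFamilies_of_mem {d m i : ℕ} (hi : i ≤ d) (hm : 1 ≤ m) {P : Finset (Finset ℕ)}
    (hP : P.card ≤ 3) {E : Finset (ℕ × ℕ)} (hE : E ∈ clusterMoves d m i)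
    (source_mem : sourceSubset (d + m) d i ∈ P)
    (mem : ∀ e ∈ E, exchange (sourceSubset (d + m) d i) e.1 e.2 ∈ P) :
    P ∈ clusterFamilies d m := by
  refine Finset.mem_image.2 ⟨⟨i, E⟩, Finset.mem_sigma.2 ⟨Finset.mem_range_succ_iff.2 hi, hE⟩, ?_⟩
  refine Finset.eq_of_subset_of_card_le (neighborhood_subset_iff.2 ⟨source_mem, mem⟩) ?_
  rwa [card_neighborhood (Finset.mem_filter.1 hE).2, card_of_mem_clusterMoves hm hE]

lemma mem_boxes_of_mem {d m i b z : ℕ} {P : Finset (Finset ℕ)} (hi : i ≤ d)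
    (source_mem : sourceSubset (d + m) d i ∈ P) (hbz : (b, z) ∈ boxMoves d m i) :
    exchange (sourceSubset (d + m) d i) b z ∈ boxes d m (sourceIndices d m P) :=
  mem_boxes.2 ⟨i, mem_sourceIndices.2 ⟨hi, source_mem⟩, b, z, hbz, rfl⟩

lemma card_lt_of_window_singleton_mem {n lo hi b : ℕ} {P : Finset (Finset ℕ)} {Z : Finset ℕ}
    (hlo : 1 ≤ lo) (hhi : hi ≤ n) (hb : b ∈ Finset.Icc lo hi) (hZ : Z ⊆ (Finset.Icc lo hi).erase b)
    (mem : window n lo hi {b} ∈ P) (memZ : ∀ z ∈ Z, window n lo hi {z} ∈ P) :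
    Z.card < P.card := by
  rw [← one_mul Z.card, ← Finset.card_singleton b, ← Finset.card_product]
  refine card_lt_of_window_mem hlo hhi (Finset.singleton_subset_iff.2 hb) mem ?_ fun e he => ?_
  · rw [← Finset.erase_eq]
    exact Finset.product_subset_product_right hZ
  · rw [Finset.mem_product, Finset.mem_singleton] at he
    rw [he.1, exchange_singleton]
    exact memZ e.2 he.2

lemma IsAligned.window_singleton_mem {n lo hi b : ℕ} {P : Finset (Finset ℕ)} (hP : IsAligned n P)
    (hlo : 1 ≤ lo) (hhi : hi ≤ n) (hb : b ∈ Finset.Icc lo hi) (mem : window n lo hi {b} ∈ P) :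
    (∀ z ∈ Finset.Ico lo b, window n lo hi {z} ∈ P) ∨
      (∀ z ∈ Finset.Ioc b hi, window n lo hi {z} ∈ P) := by
  have closed := hP.window_mem hlo hhi (Finset.singleton_subset_iff.2 hb)
    (Finset.mem_singleton_self b) mem
  simp only [exchange_singleton, Finset.mem_sdiff, Finset.mem_singleton, Finset.mem_Icc]
    at closed hb
  refine closed.imp (fun left z hz => ?_) (fun right z hz => ?_)
  · rw [Finset.mem_Ico] at hz
    exact left z (by omega) hz.2
  · rw [Finset.mem_Ioc] at hz
    exact right z (by omega) hz.1

lemma window_singleton_eq_exchange_left {d m i z : ℕ} (hi : i ≤ d) (hz : z ∈ Finset.Icc i (i + m)) :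
    window (d + m) i (i + m) {z} = exchange (sourceSubset (d + m) d i) i z := by
  ext x
  simp only [mem_window, mem_exchange, mem_sourceSubset, Finset.mem_singleton, Finset.mem_Icc]
    at hz ⊢
  omega

lemma window_singleton_eq_exchange_right {d m i z : ℕ} (hi : i < d)
    (hz : z ∈ Finset.Icc (i + 1) (i + m + 1)) :
    window (d + m) (i + 1) (i + m + 1) {z} =
      exchange (sourceSubset (d + m) d i) (i + m + 1) z := by
  ext x
  simp only [mem_window, mem_exchange, mem_sourceSubset, Finset.mem_singleton, Finset.mem_Icc]
    at hz ⊢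
  omega

lemma window_singleton_mem_boxes_or_of_left {d m i b : ℕ} {P : Finset (Finset ℕ)}
    (hi : i ∈ Finset.Icc 1 d) (card_le : P.card ≤ 3) (hb : b ∈ Finset.Ioo i (i + m))
    (mem : window (d + m) i (i + m) {b} ∈ P)
    (left : ∀ z ∈ Finset.Ico i b, window (d + m) i (i + m) {z} ∈ P) :
    window (d + m) i (i + m) {b} ∈ boxes d m (sourceIndices d m P) ∨ P ∈ clusterFamilies d m := by
  rw [Finset.mem_Icc] at hi
  rw [Finset.mem_Ioo] at hb
  have exchange_mem {z : ℕ} (hz : i ≤ z ∧ z < b) :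
      exchange (sourceSubset (d + m) d i) i z ∈ P := by
    rw [← window_singleton_eq_exchange_left hi.2 (Finset.mem_Icc.2 (by omega))]
    exact left z (Finset.mem_Ico.2 hz)
  have source_mem : sourceSubset (d + m) d i ∈ P := by
    rw [← exchange_self (mem_sourceSubset.2 (.inl ⟨hi.1, le_rfl⟩))]
    exact exchange_mem ⟨le_rfl, hb.1⟩
  have card_lt : b - i < P.card := by
    rw [← Nat.card_Ico]
    refine card_lt_of_window_singleton_mem hi.1 (by omega) (Finset.mem_Icc.2 (by omega))
      (fun z hz => ?_) mem left
    simp only [Finset.mem_Ico, Finset.mem_erase, Finset.mem_Icc] at hz ⊢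
    omega
  have eq_exchange := window_singleton_eq_exchange_left hi.2 (m := m)
    (Finset.mem_Icc.2 ⟨hb.1.le, hb.2.le⟩)
  rw [eq_exchange] at mem ⊢
  obtain rfl | rfl : b = i + 1 ∨ b = i + 2 := by omega
  · exact .inl (mem_boxes_of_mem hi.2 source_mem ((mem_boxMoves hi.2).2 (by omega)))
  · refine .inr (mem_clusterFamilies_of_mem hi.2 (by omega) card_le
      (E := {(i, i + 1), (i, i + 2)}) ?_ source_mem ?_)
    · simp only [clusterMoves, Finset.mem_filter, Finset.mem_insert, true_or, or_true, true_and,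
        Finset.insert_subset_iff, Finset.singleton_subset_iff, mem_moves_sourceSubset hi.2]
      omega
    · simp only [Finset.mem_insert, Finset.mem_singleton, forall_eq_or_imp, forall_eq]
      exact ⟨exchange_mem (by omega), mem⟩

lemma window_singleton_mem_boxes_or_of_right {d m i b : ℕ} {P : Finset (Finset ℕ)} (hi : i < d)
    (card_le : P.card ≤ 3) (hb : b ∈ Finset.Ioo (i + 1) (i + m + 1))
    (mem : window (d + m) (i + 1) (i + m + 1) {b} ∈ P)
    (right : ∀ z ∈ Finset.Ioc b (i + m + 1), window (d + m) (i + 1) (i + m + 1) {z} ∈ P) :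
    window (d + m) (i + 1) (i + m + 1) {b} ∈ boxes d m (sourceIndices d m P) ∨
      P ∈ clusterFamilies d m := by
  rw [Finset.mem_Ioo] at hb
  have exchange_mem {z : ℕ} (hz : b < z ∧ z ≤ i + m + 1) :
      exchange (sourceSubset (d + m) d i) (i + m + 1) z ∈ P := by
    rw [← window_singleton_eq_exchange_right hi (Finset.mem_Icc.2 (by omega))]
    exact right z (Finset.mem_Ioc.2 hz)
  have source_mem : sourceSubset (d + m) d i ∈ P := by
    rw [← exchange_self (b := i + m + 1) (mem_sourceSubset.2 (by omega))]
    exact exchange_mem ⟨hb.2, le_rfl⟩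
  have card_lt : i + m + 1 - b < P.card := by
    rw [← Nat.card_Ioc]
    refine card_lt_of_window_singleton_mem (by omega) (by omega) (Finset.mem_Icc.2 (by omega))
      (fun z hz => ?_) mem right
    simp only [Finset.mem_Ioc, Finset.mem_erase, Finset.mem_Icc] at hz ⊢
    omega
  have eq_exchange := window_singleton_eq_exchange_right hi (m := m)
    (Finset.mem_Icc.2 ⟨hb.1.le, hb.2.le⟩)
  rw [eq_exchange] at mem ⊢
  obtain rfl | rfl : b = i + m ∨ b = i + m - 1 := by omega
  · exact .inl (mem_boxes_of_mem hi.le source_mem ((mem_boxMoves hi.le).2 (by omega)))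
  · refine .inr (mem_clusterFamilies_of_mem hi.le (by omega) card_le
      (E := {(i + m + 1, i + m), (i + m + 1, i + m - 1)}) ?_ source_mem ?_)
    · simp only [clusterMoves, Finset.mem_filter, Finset.mem_insert, true_or, or_true, true_and,
        Finset.insert_subset_iff, Finset.singleton_subset_iff, mem_moves_sourceSubset hi.le]
      omega
    · simp only [Finset.mem_insert, Finset.mem_singleton, forall_eq_or_imp, forall_eq]
      exact ⟨exchange_mem (by omega), mem⟩

lemma exchange_pair_left {a b : ℕ} (hab : a ≠ b) (z : ℕ) : exchange {a, b} a z = {z, b} := by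
  rw [exchange, Finset.erase_insert (Finset.notMem_singleton.2 hab)]

lemma exchange_pair_right {a b : ℕ} (hab : a ≠ b) (z : ℕ) : exchange {a, b} b z = {a, z} := by
  rw [Finset.pair_comm a b, exchange_pair_left hab.symm, Finset.pair_comm]

lemma card_add_card_lt_of_window_pair_mem {n lo hi a b : ℕ} {P : Finset (Finset ℕ)}
    {Y Z : Finset ℕ} (hlo : 1 ≤ lo) (hhi : hi ≤ n) (ha : a ∈ Finset.Icc lo hi)
    (hb : b ∈ Finset.Icc lo hi) (hab : a ≠ b) (mem : window n lo hi {a, b} ∈ P)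
    (hY : Y ⊆ Finset.Icc lo hi \ {a, b}) (memY : ∀ y ∈ Y, window n lo hi {y, b} ∈ P)
    (hZ : Z ⊆ Finset.Icc lo hi \ {a, b}) (memZ : ∀ z ∈ Z, window n lo hi {a, z} ∈ P) :
    Y.card + Z.card < P.card := by
  have disjoint : Disjoint ({a} ×ˢ Y) ({b} ×ˢ Z) :=
    Finset.disjoint_product.2 (.inl (Finset.disjoint_singleton.2 hab))
  have card_eq : (({a} ×ˢ Y) ∪ ({b} ×ˢ Z)).card = Y.card + Z.card := by
    simp only [Finset.card_union_of_disjoint disjoint, Finset.card_product, Finset.card_singleton,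
      one_mul]
  rw [← card_eq]
  refine card_lt_of_window_mem hlo hhi
    (Finset.insert_subset ha (Finset.singleton_subset_iff.2 hb)) mem
    (Finset.union_subset (Finset.product_subset_product (by simp) hY)
      (Finset.product_subset_product (by simp) hZ)) fun e he => ?_
  simp only [Finset.mem_union, Finset.mem_product, Finset.mem_singleton] at he
  rcases he with ⟨rfl, he⟩ | ⟨rfl, he⟩
  · rw [exchange_pair_left hab]
    exact memY _ he
  · rw [exchange_pair_right hab]
    exact memZ _ he

lemma IsAligned.window_pair_mem {n lo hi a b : ℕ} {P : Finset (Finset ℕ)} (hP : IsAligned n P)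
    (hlo : 1 ≤ lo) (hhi : hi ≤ n) (ha : a ∈ Finset.Icc lo hi) (hb : b ∈ Finset.Icc lo hi)
    (hab : a ≠ b) (mem : window n lo hi {a, b} ∈ P) :
    (∀ z ∈ (Finset.Ico lo a).erase b, window n lo hi {z, b} ∈ P) ∨
      (∀ z ∈ (Finset.Ioc a hi).erase b, window n lo hi {z, b} ∈ P) := by
  have closed := hP.window_mem hlo hhi
    (Finset.insert_subset ha (Finset.singleton_subset_iff.2 hb)) (Finset.mem_insert_self a {b}) mem
  simp only [exchange_pair_left hab, Finset.mem_sdiff, Finset.mem_insert, Finset.mem_singleton,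
    Finset.mem_Icc] at closed ha
  refine closed.imp (fun left z hz => ?_) (fun right z hz => ?_)
  · rw [Finset.mem_erase, Finset.mem_Ico] at hz
    exact left z (by omega) hz.2.2
  · rw [Finset.mem_erase, Finset.mem_Ioc] at hz
    exact right z (by omega) hz.2.1

lemma mem_clusterFamilies_of_left_pairs_mem {d m i : ℕ} (hi : i + 1 ≤ d) (hi' : 1 ≤ i) (hm : 1 ≤ m)
    {P : Finset (Finset ℕ)} (card_le : P.card ≤ 3)
    (mem : ∀ M ∈ ({{i, i + 1}, {i, i + 2}, {i + 2, i + 1}} : Finset (Finset ℕ)),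
      window (d + m) i (i + 1 + m) M ∈ P) : P ∈ clusterFamilies d m := by
  have subset : {i, i + 1} ⊆ Finset.Icc i (i + 1 + m) := by
    simp only [Finset.insert_subset_iff, Finset.singleton_subset_iff, Finset.mem_Icc]
    omega
  have source_eq : window (d + m) i (i + 1 + m) {i, i + 1} = sourceSubset (d + m) d (i + 1) := by
    ext x
    simp only [mem_window, mem_sourceSubset, Finset.mem_insert, Finset.mem_singleton]
    omega
  have exchange_eq (b z : ℕ) (hb : b ∈ ({i, i + 1} : Finset ℕ)) :
      exchange (sourceSubset (d + m) d (i + 1)) b z =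
        window (d + m) i (i + 1 + m) (exchange {i, i + 1} b z) := by
    rw [← source_eq, exchange_window subset hb]
  refine mem_clusterFamilies_of_mem (i := i + 1) hi hm card_le
    (E := {(i + 1, i + 2), (i, i + 2)}) ?_ (source_eq ▸ mem _ (by simp)) ?_
  · simp only [clusterMoves, Finset.mem_filter, Finset.mem_insert, Nat.add_sub_cancel, add_assoc,
      Nat.reduceAdd, true_or, or_true, true_and, Finset.insert_subset_iff,
      Finset.singleton_subset_iff, mem_moves_sourceSubset hi]
    omega
  · simp only [Finset.mem_insert, Finset.mem_singleton, forall_eq_or_imp, forall_eq]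
    rw [exchange_eq _ _ (by simp), exchange_eq _ _ (by simp), exchange_pair_right (by omega),
      exchange_pair_left (by omega)]
    exact ⟨mem _ (by simp), mem _ (by simp)⟩

lemma mem_clusterFamilies_of_right_pairs_mem {d m i : ℕ} (hi : i + 2 ≤ d) (hm : 1 ≤ m)
    {P : Finset (Finset ℕ)} (card_le : P.card ≤ 3)
    (mem : ∀ M ∈ ({{i + m + 1, i + m + 2}, {i + m, i + m + 2}, {i + m + 1, i + m}} :
      Finset (Finset ℕ)), window (d + m) (i + 1) (i + m + 2) M ∈ P) : P ∈ clusterFamilies d m := by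
  have hi' : i ≤ d := by omega
  have subset : {i + m + 1, i + m + 2} ⊆ Finset.Icc (i + 1) (i + m + 2) := by
    simp only [Finset.insert_subset_iff, Finset.singleton_subset_iff, Finset.mem_Icc]
    omega
  have source_eq : window (d + m) (i + 1) (i + m + 2) {i + m + 1, i + m + 2} =
      sourceSubset (d + m) d i := by
    ext x
    simp only [mem_window, mem_sourceSubset, Finset.mem_insert, Finset.mem_singleton]
    omega
  have exchange_eq (b z : ℕ) (hb : b ∈ ({i + m + 1, i + m + 2} : Finset ℕ)) :
      exchange (sourceSubset (d + m) d i) b z =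
        window (d + m) (i + 1) (i + m + 2) (exchange {i + m + 1, i + m + 2} b z) := by
    rw [← source_eq, exchange_window subset hb]
  refine mem_clusterFamilies_of_mem hi' hm card_le
    (E := {(i + m + 1, i + m), (i + m + 2, i + m)}) ?_ (source_eq ▸ mem _ (by simp)) ?_
  · simp only [clusterMoves, Finset.mem_filter, Finset.mem_insert, Finset.mem_singleton,
      or_true, true_and, Finset.insert_subset_iff, Finset.singleton_subset_iff,
      mem_moves_sourceSubset hi']
    omega
  · simp only [Finset.mem_insert, Finset.mem_singleton, forall_eq_or_imp, forall_eq]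
    rw [exchange_eq _ _ (by simp), exchange_eq _ _ (by simp), exchange_pair_left (by omega),
      exchange_pair_right (by omega)]
    exact ⟨mem _ (by simp), mem _ (by simp)⟩

lemma window_pair_injOn {n lo hi a b : ℕ} (hab : a < b) :
    Set.InjOn (fun e : ℕ × ℕ => window n lo hi {e.1, e.2})
      (Finset.Icc lo a ×ˢ Finset.Icc b hi) := by
  rintro ⟨y, z⟩ hyz ⟨y', z'⟩ hyz' h
  simp only [Set.mem_prod, Finset.coe_Icc, Set.mem_Icc] at hyz hyz'
  have mem_iff (x : ℕ) : x ∈ window n lo hi {y, z} ↔ x ∈ window n lo hi {y', z'} := by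
    rw [show window n lo hi {y, z} = window n lo hi {y', z'} from h]
  simp only [mem_window, Finset.mem_insert, Finset.mem_singleton] at mem_iff
  have := mem_iff y
  have := mem_iff z
  rw [Prod.mk.injEq]
  omega

lemma three_lt_card_of_window_pairs_mem {n lo hi a b : ℕ} {P : Finset (Finset ℕ)}
    (hP : IsAligned n P) (hlo : 1 ≤ lo) (hhi : hi ≤ n) (ha : lo < a) (hab : a < b) (hb : b < hi)
    (mem : window n lo hi {a, b} ∈ P) (mem_left : window n lo hi {lo, b} ∈ P)
    (mem_right : window n lo hi {a, hi} ∈ P) : 3 < P.card := by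
  rw [Finset.pair_comm] at mem_left
  have closed := hP.window_pair_mem hlo hhi (Finset.mem_Icc.2 ⟨by omega, hb.le⟩)
    (Finset.left_mem_Icc.2 (by omega)) (by omega) mem_left
  rcases closed with left | right
  · have mem_a : window n lo hi {a, lo} ∈ P :=
      Finset.pair_comm a lo ▸ left a (by simp only [Finset.mem_erase, Finset.mem_Ico]; omega)
    have lt : ({lo} : Finset ℕ).card + ({lo, hi} : Finset ℕ).card < P.card := by
      refine card_add_card_lt_of_window_pair_mem hlo hhi (Finset.mem_Icc.2 (by omega))
        (Finset.mem_Icc.2 (by omega)) hab.ne mem ?_ (by simpa [Finset.pair_comm] using mem_left)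
        ?_ (by simp [mem_a, mem_right])
      all_goals
        simp only [Finset.insert_subset_iff, Finset.singleton_subset_iff, Finset.mem_sdiff,
          Finset.mem_insert, Finset.mem_singleton, Finset.mem_Icc]
        omega
    rw [Finset.card_singleton, Finset.card_pair (by omega)] at lt
    exact lt
  · have mem_hi : window n lo hi {hi, lo} ∈ P :=
      right hi (by simp only [Finset.mem_erase, Finset.mem_Ioc]; omega)
    rw [Finset.pair_comm] at mem_left mem_hi
    have inj : Set.InjOn (fun e : ℕ × ℕ => window n lo hi {e.1, e.2})
        ↑(({lo, a} : Finset ℕ) ×ˢ ({b, hi} : Finset ℕ)) := by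
      refine (window_pair_injOn hab).mono ?_
      rw [Finset.coe_product]
      refine Set.prod_mono (fun y hy => ?_) (fun z hz => ?_)
      · simp only [Finset.coe_insert, Finset.coe_singleton, Set.mem_insert_iff,
          Set.mem_singleton_iff, Finset.coe_Icc, Set.mem_Icc] at hy ⊢
        omega
      · simp only [Finset.coe_insert, Finset.coe_singleton, Set.mem_insert_iff,
          Set.mem_singleton_iff, Finset.coe_Icc, Set.mem_Icc] at hz ⊢
        omega
    have maps_to : ∀ e ∈ ({lo, a} : Finset ℕ) ×ˢ ({b, hi} : Finset ℕ),
        window n lo hi {e.1, e.2} ∈ P := by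
      simp only [Finset.mem_product, Finset.mem_insert, Finset.mem_singleton, Prod.forall]
      rintro y z ⟨rfl | rfl, rfl | rfl⟩ <;> assumption
    have card_le : (({lo, a} : Finset ℕ) ×ˢ ({b, hi} : Finset ℕ)).card ≤ P.card :=
      Finset.card_le_card_of_injOn _ maps_to inj
    rwa [Finset.card_product, Finset.card_pair ha.ne, Finset.card_pair hb.ne] at card_le

lemma Ico_erase_subset_Icc_sdiff_pair {lo hi a b : ℕ} (hb : b ≤ hi) :
    (Finset.Ico lo b).erase a ⊆ Finset.Icc lo hi \ {a, b} := by
  intro z hz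
  simp only [Finset.mem_erase, Finset.mem_Ico, Finset.mem_sdiff, Finset.mem_insert,
    Finset.mem_singleton, Finset.mem_Icc] at hz ⊢
  omega

lemma Ioc_erase_subset_Icc_sdiff_pair {lo hi a b : ℕ} (hb : lo ≤ b) :
    (Finset.Ioc b hi).erase a ⊆ Finset.Icc lo hi \ {a, b} := by
  intro z hz
  simp only [Finset.mem_erase, Finset.mem_Ioc, Finset.mem_sdiff, Finset.mem_insert,
    Finset.mem_singleton, Finset.mem_Icc] at hz ⊢
  omega

lemma mem_clusterFamilies_of_window_pair_left {d m lo hi a b : ℕ} {P : Finset (Finset ℕ)}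
    (card_le : P.card ≤ 3) (hm : 1 ≤ m) (hlo : 1 ≤ lo) (hhi : hi ≤ d + m)
    (lo_hi : hi + 1 = lo + m + 2) (ha : lo < a) (hab : a < b) (hb : b < hi)
    (mem : window (d + m) lo hi {a, b} ∈ P)
    (left_a : ∀ z ∈ (Finset.Ico lo a).erase b, window (d + m) lo hi {z, b} ∈ P)
    (left_b : ∀ z ∈ (Finset.Ico lo b).erase a, window (d + m) lo hi {a, z} ∈ P) :
    P ∈ clusterFamilies d m := by
  have lt := card_add_card_lt_of_window_pair_mem hlo hhi (Finset.mem_Icc.2 ⟨by omega, by omega⟩)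
    (Finset.mem_Icc.2 ⟨by omega, by omega⟩) hab.ne mem
    (Finset.pair_comm a b ▸ Ico_erase_subset_Icc_sdiff_pair (hab.trans hb).le) left_a
    (Ico_erase_subset_Icc_sdiff_pair hb.le) left_b
  rw [Finset.erase_eq_of_notMem (fun h => hab.asymm (Finset.mem_Ico.1 h).2),
    Finset.card_erase_of_mem (Finset.mem_Ico.2 ⟨ha.le, hab⟩), Nat.card_Ico, Nat.card_Ico] at lt
  obtain ⟨rfl, rfl⟩ : a = lo + 1 ∧ b = lo + 2 := by omega
  obtain rfl : hi = lo + 1 + m := by omega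
  refine mem_clusterFamilies_of_left_pairs_mem (by omega) hlo hm card_le ?_
  simp only [Finset.mem_insert, Finset.mem_singleton, forall_eq_or_imp, forall_eq]
  rw [Finset.pair_comm lo, Finset.pair_comm (lo + 2)]
  exact ⟨left_b lo (by simp), left_a lo (by simp), mem⟩

lemma mem_clusterFamilies_of_window_pair_right {d m lo hi a b : ℕ} {P : Finset (Finset ℕ)}
    (card_le : P.card ≤ 3) (hm : 1 ≤ m) (hlo : 1 ≤ lo) (hhi : hi ≤ d + m)
    (lo_hi : hi + 1 = lo + m + 2) (ha : lo < a) (hab : a < b) (hb : b < hi)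
    (mem : window (d + m) lo hi {a, b} ∈ P)
    (right_a : ∀ z ∈ (Finset.Ioc a hi).erase b, window (d + m) lo hi {z, b} ∈ P)
    (right_b : ∀ z ∈ (Finset.Ioc b hi).erase a, window (d + m) lo hi {a, z} ∈ P) :
    P ∈ clusterFamilies d m := by
  have lt := card_add_card_lt_of_window_pair_mem hlo hhi (Finset.mem_Icc.2 ⟨by omega, by omega⟩)
    (Finset.mem_Icc.2 ⟨by omega, by omega⟩) hab.ne mem
    (Finset.pair_comm a b ▸ Ioc_erase_subset_Icc_sdiff_pair ha.le) right_a
    (Ioc_erase_subset_Icc_sdiff_pair (ha.trans hab).le) right_b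
  rw [Finset.card_erase_of_mem (Finset.mem_Ioc.2 ⟨hab, hb.le⟩),
    Finset.erase_eq_of_notMem (fun h => hab.asymm (Finset.mem_Ioc.1 h).1), Nat.card_Ioc,
    Nat.card_Ioc] at lt
  obtain ⟨i, rfl⟩ : ∃ i, lo = i + 1 := ⟨lo - 1, by omega⟩
  obtain rfl : hi = i + m + 2 := by omega
  obtain ⟨rfl, rfl⟩ : a = i + m ∧ b = i + m + 1 := by omega
  refine mem_clusterFamilies_of_right_pairs_mem (i := i) (by omega) hm card_le ?_
  simp only [Finset.mem_insert, Finset.mem_singleton, forall_eq_or_imp, forall_eq]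
  rw [Finset.pair_comm (i + m + 1), Finset.pair_comm (i + m + 1)]
  exact ⟨right_a _ (by simp), right_b _ (by simp), mem⟩

lemma mem_clusterFamilies_of_window_pair_mem {d m lo hi a b : ℕ} {P : Finset (Finset ℕ)}
    (hP : IsAligned (d + m) P) (card_le : P.card ≤ 3) (hm : 3 ≤ m) (hlo : 1 ≤ lo) (hhi : hi ≤ d + m)
    (lo_hi : hi + 1 = lo + m + 2) (ha : lo < a) (hab : a < b) (hb : b < hi)
    (mem : window (d + m) lo hi {a, b} ∈ P) : P ∈ clusterFamilies d m := by
  have ha' : a ∈ Finset.Icc lo hi := Finset.mem_Icc.2 (by omega)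
  have hb' : b ∈ Finset.Icc lo hi := Finset.mem_Icc.2 (by omega)
  have closed_a := hP.window_pair_mem hlo hhi ha' hb' hab.ne mem
  have closed_b := hP.window_pair_mem hlo hhi hb' ha' hab.ne' (Finset.pair_comm a b ▸ mem)
  simp only [Finset.pair_comm _ a] at closed_b
  rcases closed_a with left_a | right_a <;> rcases closed_b with left_b | right_b
  · exact mem_clusterFamilies_of_window_pair_left card_le (by omega) hlo hhi lo_hi ha hab hb mem
      left_a left_b
  · have := three_lt_card_of_window_pairs_mem hP hlo hhi ha hab hb mem
      (left_a lo (by simp only [Finset.mem_erase, Finset.mem_Ico]; omega))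
      (right_b hi (by simp only [Finset.mem_erase, Finset.mem_Ioc]; omega))
    omega
  · have lt := card_add_card_lt_of_window_pair_mem hlo hhi ha' hb' hab.ne mem
      (Finset.pair_comm a b ▸ Ioc_erase_subset_Icc_sdiff_pair ha.le) right_a
      (Ico_erase_subset_Icc_sdiff_pair hb.le) left_b
    rw [Finset.card_erase_of_mem (Finset.mem_Ioc.2 ⟨hab, hb.le⟩),
      Finset.card_erase_of_mem (Finset.mem_Ico.2 ⟨ha.le, hab⟩), Nat.card_Ioc, Nat.card_Ico] at lt
    omega
  · exact mem_clusterFamilies_of_window_pair_right card_le (by omega) hlo hhi lo_hi ha hab hb mem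
      right_a right_b

lemma window_empty_eq_sourceSubset {d m i : ℕ} (hi : i ≤ d) :
    window (d + m) (i + 1) (i + m) ∅ = sourceSubset (d + m) d i := by
  ext x
  simp only [mem_window, mem_sourceSubset, Finset.notMem_empty, or_false]
  omega

lemma IsAligned.mem_sources_or_mem_boxes {d m : ℕ} {P : Finset (Finset ℕ)}
    (hP : IsAligned (d + m) P) (subset : P ⊆ (Finset.Icc 1 (d + m)).powersetCard d)
    (card_le : P.card ≤ 3) (card_le_m : P.card ≤ m) (notMem : P ∉ clusterFamilies d m)
    {A : Finset ℕ} (hA : A ∈ P) :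
    A ∈ (sourceIndices d m P).image (sourceSubset (d + m) d) ∨
      A ∈ boxes d m (sourceIndices d m P) := by
  obtain ⟨A_subset, A_card⟩ := Finset.mem_powersetCard.1 (subset hA)
  have card_pos := Finset.card_pos.2 ⟨A, hA⟩
  obtain ⟨lo, hi, M, hlo, hhi, hM, lo_hi, rfl⟩ :=
    exists_eq_window (n := d + m) (m := m) (by omega) A_subset (by rw [A_card])
  have card_lt := card_lt_card_of_window_mem hP hlo hhi hM hA
  obtain ⟨i, rfl⟩ : ∃ i, lo = i + 1 := ⟨lo - 1, by omega⟩
  obtain card | card | card : M.card = 0 ∨ M.card = 1 ∨ M.card = 2 := by omega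
  · obtain rfl := Finset.card_eq_zero.1 card
    obtain rfl : hi = i + m := by omega
    rw [window_empty_eq_sourceSubset (by omega)] at hA ⊢
    exact .inl (Finset.mem_image_of_mem _ (mem_sourceIndices.2 ⟨by omega, hA⟩))
  · obtain ⟨b, rfl⟩ := Finset.card_eq_one.1 card
    rw [Finset.singleton_subset_iff] at hM
    refine .inr (Or.resolve_right ?_ notMem)
    rcases hP.window_singleton_mem hlo hhi (Finset.Ioo_subset_Icc_self hM) hA with left | right
    · obtain rfl : hi = i + 1 + m := by omega
      exact window_singleton_mem_boxes_or_of_left (Finset.mem_Icc.2 (by omega)) card_le hM hA left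
    · obtain rfl : hi = i + m + 1 := by omega
      exact window_singleton_mem_boxes_or_of_right (by omega) card_le hM hA right
  · obtain ⟨a, b, lt, rfl⟩ : ∃ a b, a < b ∧ M = {a, b} := by
      obtain ⟨a, b, ne, rfl⟩ := Finset.card_eq_two.1 card
      rcases ne.lt_or_gt with lt | lt
      exacts [⟨a, b, lt, rfl⟩, ⟨b, a, lt, Finset.pair_comm a b⟩]
    simp only [Finset.insert_subset_iff, Finset.singleton_subset_iff, Finset.mem_Ioo] at hM
    exact absurd (mem_clusterFamilies_of_window_pair_mem hP card_le (by omega) hlo hhi (by omega)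
      hM.1.1 lt hM.2.2 hA) notMem

lemma IsAligned.window_singleton_mem_of_ends {n lo hi : ℕ} {P : Finset (Finset ℕ)}
    (hP : IsAligned n P) (hlo : 1 ≤ lo) (hhi : hi ≤ n) (mem_lo : window n lo hi {lo} ∈ P)
    (mem_hi : window n lo hi {hi} ∈ P) {z : ℕ} (hz : z ∈ Finset.Icc lo hi) :
    window n lo hi {z} ∈ P := by
  have mem_sdiff {x : ℕ} (hx : lo ≤ x ∧ x ≤ hi) :
      x ∈ (↑(Finset.Icc 1 n \ window n lo hi ∅) : Set ℕ) := by
    simp only [Finset.coe_sdiff, Finset.coe_Icc, Set.mem_sdiff, Set.mem_Icc, Finset.mem_coe,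
      mem_window, Finset.notMem_empty, or_false]
    omega
  have insert_eq (x : ℕ) : insert x (window n lo hi ∅) = window n lo hi {x} := by
    rw [window, window, Finset.union_empty, Finset.union_comm, Finset.insert_eq]
  obtain ⟨lo_le, le_hi⟩ := Finset.mem_Icc.1 hz
  have aligned := hP (window n lo hi ∅)
  simp only [insert_eq] at aligned
  rcases aligned with mono | anti
  · exact mono (mem_sdiff ⟨le_rfl, lo_le.trans le_hi⟩) (mem_sdiff ⟨lo_le, le_hi⟩) lo_le mem_lo
  · exact anti (mem_sdiff ⟨lo_le, le_hi⟩) (mem_sdiff ⟨lo_le.trans le_hi, le_rfl⟩) le_hi mem_hi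

lemma IsAligned.sourceIndices_mem_sparseSubsets {d m : ℕ} {P : Finset (Finset ℕ)}
    (hP : IsAligned (d + m) P) (card_le : P.card ≤ m) :
    sourceIndices d m P ∈ sparseSubsets (d + 1) (sourceIndices d m P).card := by
  refine Finset.mem_filter.2 ⟨Finset.mem_powersetCard.2 ⟨Finset.filter_subset _ _, rfl⟩,
    fun i hi hi' => card_le.not_gt ?_⟩
  rw [mem_sourceIndices] at hi hi'
  have source_eq : window (d + m) (i + 1) (i + m + 1) {i + m + 1} = sourceSubset (d + m) d i := by
    ext x
    simp only [mem_window, mem_sourceSubset, Finset.mem_singleton]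
    omega
  have source_succ_eq :
      window (d + m) (i + 1) (i + m + 1) {i + 1} = sourceSubset (d + m) d (i + 1) := by
    ext x
    simp only [mem_window, mem_sourceSubset, Finset.mem_singleton]
    omega
  rw [← source_eq] at hi
  rw [← source_succ_eq] at hi'
  have mem {z : ℕ} := hP.window_singleton_mem_of_ends (z := z) (by omega) (by omega) hi'.2 hi.2
  have lt := card_lt_of_window_singleton_mem (Z := Finset.Ico (i + 1) (i + m + 1)) (by omega)
    (by omega) (Finset.right_mem_Icc.2 (by omega)) (Finset.Icc_erase_right _ _).ge hi.2
    fun z hz => mem (Finset.Ico_subset_Icc_self hz)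
  rw [Nat.card_Ico] at lt
  omega

lemma card_boxMoves_le (d m i : ℕ) : (boxMoves d m i).card ≤ 2 :=
  (Finset.card_le_card Finset.inter_subset_left).trans Finset.card_le_two

lemma mem_clusterFamilies_of_boxes_singleton_subset {d m i : ℕ} {P R : Finset (Finset ℕ)}
    (hm : 1 ≤ m) (card_le : P.card ≤ 3) (hi : i ∈ sourceIndices d m P) (hRP : R ⊆ P)
    (hR : R ⊆ boxes d m {i}) (card : 2 ≤ R.card) : P ∈ clusterFamilies d m := by
  rw [boxes, Finset.singleton_biUnion] at hR
  have le_boxMoves := (card.trans (Finset.card_le_card hR)).trans Finset.card_image_le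
  have R_eq := Finset.eq_of_subset_of_card_le hR
    ((Finset.card_image_le.trans (card_boxMoves_le d m i)).trans card)
  have boxMoves_eq : boxMoves d m i = {(i, i + 1), (i + m + 1, i + m)} :=
    Finset.eq_of_subset_of_card_le Finset.inter_subset_left (Finset.card_le_two.trans le_boxMoves)
  have mem_clusterMoves : boxMoves d m i ∈ clusterMoves d m i :=
    Finset.mem_filter.2 ⟨boxMoves_eq ▸ Finset.mem_insert_self _ _, Finset.inter_subset_right⟩
  refine mem_clusterFamilies_of_mem (mem_sourceIndices.1 hi).1 hm card_le mem_clusterMoves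
    (mem_sourceIndices.1 hi).2 fun e he => hRP ?_
  rw [R_eq]
  exact Finset.mem_image_of_mem _ he

lemma mem_families_of_mem_coSigFamilies {d m p : ℕ} (hm : 1 ≤ m) (hp : p ≤ 3) (hpm : p ≤ m)
    {P : Finset (Finset ℕ)} (hP : P ∈ coSigFamilies (d + m) d p) :
    P ∈ sourceFamilies d m p ∨ P ∈ boxFamilies d m (p - 1) ∨ P ∈ clusterFamilies d m := by
  obtain ⟨subset, rfl, aligned⟩ := mem_coSigFamilies.1 hP
  by_contra! notMem
  obtain ⟨not_source, not_box, not_cluster⟩ := notMem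
  set T := sourceIndices d m P
  have sparse : T ∈ sparseSubsets (d + 1) T.card := aligned.sourceIndices_mem_sparseSubsets hpm
  set Q := T.image (sourceSubset (d + m) d)
  have QP : Q ⊆ P := Finset.image_subset_iff.2 fun i hi => (mem_sourceIndices.1 hi).2
  have sub_boxes : P \ Q ⊆ boxes d m T := fun A hA => by
    rw [Finset.mem_sdiff] at hA
    exact (aligned.mem_sources_or_mem_boxes subset hp hpm not_cluster hA.1).resolve_left hA.2
  have card_Q : Q.card = T.card :=
    Finset.card_image_of_injOn ((sourceSubset_injOn hm).mono (Finset.filter_subset _ _))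
  have card_sdiff : (P \ Q).card + T.card = P.card :=
    card_Q ▸ Finset.card_sdiff_add_card_eq_card QP
  obtain card | card | card : (P \ Q).card = 0 ∨ (P \ Q).card = 1 ∨ 2 ≤ (P \ Q).card := by omega
  · rw [card, zero_add] at card_sdiff
    rw [Finset.card_eq_zero, Finset.sdiff_eq_empty_iff_subset] at card
    exact not_source (Finset.mem_image.2 ⟨T, card_sdiff ▸ sparse, QP.antisymm card⟩)
  · rw [show T.card = P.card - 1 by omega] at sparse
    obtain ⟨B, hB⟩ := Finset.card_eq_one.1 card
    refine not_box (Finset.mem_image.2 ⟨⟨T, B⟩, Finset.mem_sigma.2 ⟨sparse, sub_boxes ?_⟩, ?_⟩)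
    · exact hB ▸ Finset.mem_singleton_self B
    · rw [Finset.insert_eq, ← hB, Finset.sdiff_union_of_subset QP]
  · obtain ⟨B, hB⟩ : (P \ Q).Nonempty := Finset.card_pos.1 (by omega)
    obtain ⟨i, hi, -⟩ := mem_boxes.1 (sub_boxes hB)
    have card_T : 0 < T.card := Finset.card_pos.2 ⟨i, hi⟩
    have T_eq : {i} = T := Finset.eq_of_subset_of_card_le (Finset.singleton_subset_iff.2 hi)
      (by rw [Finset.card_singleton]; omega)
    rw [← T_eq] at sub_boxes
    exact not_cluster (mem_clusterFamilies_of_boxes_singleton_subset (by omega) hp hi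
      Finset.sdiff_subset sub_boxes card)

lemma exchange_exchange_eq_self_iff {n b z b' z' : ℕ} {A : Finset ℕ} (hbz : (b, z) ∈ moves n A) :
    exchange (exchange A b z) b' z' = A ↔ b' = z ∧ z' = b := by
  simp only [mem_moves, Finset.mem_sdiff] at hbz
  refine ⟨fun h => ?_, fun h => ?_⟩
  · have mem_iff (x : ℕ) : x ∈ exchange (exchange A b z) b' z' ↔ x ∈ A := by rw [h]
    simp only [mem_exchange] at mem_iff
    have := mem_iff z
    have := mem_iff b
    grind
  · ext x
    simp only [mem_exchange]
    grind

lemma exchange_exchange_eq_exchange_iff {n b z b₁ z₁ b' z' : ℕ} {A : Finset ℕ}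
    (hbz : (b, z) ∈ moves n A) (hbz₁ : (b₁, z₁) ∈ moves n A) (ne : (b₁, z₁) ≠ (b, z)) :
    exchange (exchange A b z) b' z' = exchange A b₁ z₁ ↔
      b₁ = b ∧ b' = z ∧ z' = z₁ ∨ z₁ = z ∧ b' = b₁ ∧ z' = b := by
  simp only [mem_moves, Finset.mem_sdiff, ne_eq, Prod.mk.injEq] at hbz hbz₁ ne
  refine ⟨fun h => ?_, fun h => ?_⟩
  · have mem_iff (x : ℕ) :
        x ∈ exchange (exchange A b z) b' z' ↔ x ∈ exchange A b₁ z₁ := by rw [h]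
    simp only [mem_exchange] at mem_iff
    have := mem_iff z
    have := mem_iff b
    have := mem_iff z₁
    have := mem_iff b₁
    have := mem_iff z'
    grind
  · ext x
    simp only [mem_exchange]
    grind

lemma adjacent_of_exchange_sourceSubset_eq {d m i j b z : ℕ} (hm : 2 ≤ m) (hi : i ≤ d) (hj : j ≤ d)
    (hbz : (b, z) ∈ moves (d + m) (sourceSubset (d + m) d i))
    (h : exchange (sourceSubset (d + m) d i) b z = sourceSubset (d + m) d j) :
    j = i + 1 ∧ b = i + m + 1 ∧ z = i + 1 ∨ i = j + 1 ∧ b = i ∧ z = i + m := by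
  have mem_iff (x : ℕ) :
      x ∈ exchange (sourceSubset (d + m) d i) b z ↔ x ∈ sourceSubset (d + m) d j := by rw [h]
  have eq_z {x : ℕ} (hx : x ∈ sourceSubset (d + m) d j)
      (hx' : x ∉ sourceSubset (d + m) d i) : x = z :=
    (mem_exchange.1 ((mem_iff x).2 hx)).resolve_right fun hx => hx' hx.2
  have eq_b {x : ℕ} (hx : x ∈ sourceSubset (d + m) d i)
      (hx' : x ∉ sourceSubset (d + m) d j) : x = b := by
    by_contra ne
    exact hx' ((mem_iff x).1 (mem_exchange.2 (.inr ⟨ne, hx⟩)))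
  simp only [mem_sourceSubset] at eq_z eq_b
  rcases lt_trichotomy i j with lt | rfl | lt
  · have z_eq := eq_z (x := i + 1) (by omega) (by omega)
    have j_eq : i + 1 = j := by
      by_contra ne
      have := eq_z (x := i + 2) (by omega) (by omega)
      omega
    have := eq_b (x := i + m + 1) (by omega) (by omega)
    omega
  · exact absurd h (exchange_ne_self (Finset.mem_sdiff.1 (mem_moves.1 hbz).2).2)
  · have z_eq := eq_z (x := i + m) (by omega) (by omega)
    have i_eq : j + 1 = i := by
      by_contra ne
      have := eq_z (x := i + m - 1) (by omega) (by omega)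
      omega
    have := eq_b (x := i) (by omega) (by omega)
    omega

lemma exchange_ne_sourceSubset_of_mem_boxMoves {d m i j b z : ℕ} (hm : 2 ≤ m) (hi : i ≤ d)
    (hj : j ≤ d) (hbz : (b, z) ∈ boxMoves d m i) :
    exchange (sourceSubset (d + m) d i) b z ≠ sourceSubset (d + m) d j := by
  intro h
  have adjacent :=
    adjacent_of_exchange_sourceSubset_eq hm hi hj (Finset.mem_inter.1 hbz).2 h
  rw [mem_boxMoves hi] at hbz
  omega

lemma exchange_exchange_ne_sourceSubset {d m i j b z b' z' : ℕ} (hm : 3 ≤ m) (hi : i ≤ d)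
    (hij : i + 1 < j ∨ j + 1 < i) (hbz : (b, z) ∈ boxMoves d m i) :
    exchange (exchange (sourceSubset (d + m) d i) b z) b' z' ≠ sourceSubset (d + m) d j := by
  intro h
  have eq_z' {x : ℕ} (hx : x ∈ sourceSubset (d + m) d j)
      (hx' : x ∉ exchange (sourceSubset (d + m) d i) b z) : x = z' := by
    rw [← h, mem_exchange] at hx
    exact hx.resolve_right fun hx => hx' hx.2
  simp only [mem_exchange, mem_sourceSubset] at eq_z'
  rcases (mem_boxMoves hi).1 hbz with ⟨rfl, rfl, legal⟩ | ⟨rfl, rfl, legal⟩ <;>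
    rcases hij with lt | lt
  · have := eq_z' (x := b) (by omega) (by omega)
    have := eq_z' (x := b + 2) (by omega) (by omega)
    omega
  · have := eq_z' (x := b + m) (by omega) (by omega)
    have := eq_z' (x := b + m - 1) (by omega) (by omega)
    omega
  · have := eq_z' (x := i + 1) (by omega) (by omega)
    have := eq_z' (x := i + 2) (by omega) (by omega)
    omega
  · have := eq_z' (x := i + m + 1) (by omega) (by omega)
    have := eq_z' (x := i + m - 1) (by omega) (by omega)
    omega

lemma isAligned_insert_source {d m i : ℕ} {P : Finset (Finset ℕ)} (hP : IsAligned (d + m) P)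
    (hi : i ≤ d) (notMem : ∀ b z, (b, z) ∈ moves (d + m) (sourceSubset (d + m) d i) →
      exchange (sourceSubset (d + m) d i) b z ∉ P) :
    IsAligned (d + m) (insert (sourceSubset (d + m) d i) P) := by
  refine isAligned_insert hP fun b hb => ?_
  have bounds {z : ℕ} (hz : z ∈ Finset.Icc 1 (d + m) \ sourceSubset (d + m) d i) :=
    (mem_moves_sourceSubset hi).1 (mem_moves.2 ⟨hb, hz⟩)
  by_cases hbi : b ≤ i
  · refine .inl fun z hz => iff_of_false (notMem b z (mem_moves.2 ⟨hb, hz⟩)) ?_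
    have := bounds hz
    omega
  · refine .inr fun z hz => iff_of_false (notMem b z (mem_moves.2 ⟨hb, hz⟩)) ?_
    have := bounds hz
    omega

lemma isAligned_image_sourceSubset {d m : ℕ} (hm : 2 ≤ m) {T : Finset ℕ} (hT : ∀ i ∈ T, i ≤ d)
    (sparse : ∀ i ∈ T, i + 1 ∉ T) : IsAligned (d + m) (T.image (sourceSubset (d + m) d)) := by
  induction T using Finset.induction_on with
  | empty => exact isAligned_empty _
  | insert i T hi ih =>
    rw [Finset.image_insert]
    refine isAligned_insert_source
      (ih (fun j hj => hT j (Finset.mem_insert_of_mem hj)) fun j hj hj' =>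
        sparse j (Finset.mem_insert_of_mem hj) (Finset.mem_insert_of_mem hj'))
      (hT i (Finset.mem_insert_self i T)) fun b z hbz h => ?_
    obtain ⟨j, hj, h⟩ := Finset.mem_image.1 h
    have : i ≠ j := fun h => hi (h ▸ hj)
    have succ_ne : i + 1 ≠ j := fun h =>
      sparse i (Finset.mem_insert_self i T) (h ▸ Finset.mem_insert_of_mem hj)
    have ne_succ : j + 1 ≠ i := fun h =>
      sparse j (Finset.mem_insert_of_mem hj) (h ▸ Finset.mem_insert_self i T)
    have adjacent := adjacent_of_exchange_sourceSubset_eq hm (hT i (Finset.mem_insert_self i T))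
      (hT j (Finset.mem_insert_of_mem hj)) hbz h.symm
    omega

lemma isAligned_insert_box {d m i b z : ℕ} {P : Finset (Finset ℕ)} (hP : IsAligned (d + m) P)
    (hi : i ≤ d) (hbz : (b, z) ∈ boxMoves d m i)
    (mem_iff : ∀ b' z', exchange (exchange (sourceSubset (d + m) d i) b z) b' z' ∈ P ↔
      b' = z ∧ z' = b) :
    IsAligned (d + m) (insert (exchange (sourceSubset (d + m) d i) b z) P) := by
  refine isAligned_insert hP fun b' hb' => ?_
  simp only [mem_iff]
  simp only [Finset.mem_sdiff, mem_exchange, mem_sourceSubset, Finset.mem_Icc] at hb' ⊢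
  rcases (mem_boxMoves hi).1 hbz with ⟨rfl, rfl, pos⟩ | ⟨rfl, rfl, pos⟩
  · by_cases h : b' ≤ b + m
    · exact .inl fun z' hz' => by omega
    · exact .inr fun z' hz' => by omega
  · by_cases h : b' ≤ i
    · exact .inl fun z' hz' => by omega
    · exact .inr fun z' hz' => by omega

lemma card_image_sourceSubset {d m k : ℕ} (hm : 1 ≤ m) {T : Finset ℕ}
    (hT : T ∈ sparseSubsets (d + 1) k) : (T.image (sourceSubset (d + m) d)).card = k := by
  obtain ⟨⟨subset, rfl⟩, -⟩ := mem_sparseSubsets.1 hT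
  exact Finset.card_image_of_injOn ((sourceSubset_injOn hm).mono subset)

lemma image_sourceSubset_subset {d m k : ℕ} {T : Finset ℕ} (hT : T ∈ sparseSubsets (d + 1) k) :
    T.image (sourceSubset (d + m) d) ⊆ (Finset.Icc 1 (d + m)).powersetCard d :=
  Finset.image_subset_iff.2 fun _ hi =>
    sourceSubset_mem_powersetCard (le_of_mem_sparseSubsets hT hi)

lemma sourceFamilies_subset_coSigFamilies {d m : ℕ} (hm : 2 ≤ m) (p : ℕ) :
    sourceFamilies d m p ⊆ coSigFamilies (d + m) d p := by
  refine Finset.image_subset_iff.2 fun T hT => mem_coSigFamilies.2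
    ⟨image_sourceSubset_subset hT, card_image_sourceSubset (by omega) hT, ?_⟩
  exact isAligned_image_sourceSubset hm (fun i => le_of_mem_sparseSubsets hT)
    (mem_sparseSubsets.1 hT).2

lemma exchange_mem_powersetCard_of_mem_moves {d m i b z : ℕ} (hi : i ≤ d)
    (hbz : (b, z) ∈ moves (d + m) (sourceSubset (d + m) d i)) :
    exchange (sourceSubset (d + m) d i) b z ∈ (Finset.Icc 1 (d + m)).powersetCard d :=
  exchange_mem_powersetCard (sourceSubset_mem_powersetCard hi) (mem_moves.1 hbz).1
    (mem_moves.1 hbz).2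

lemma sourceSubset_notMem_boxes {d m i k : ℕ} (hm : 2 ≤ m) (hi : i ≤ d) {T : Finset ℕ}
    (hT : T ∈ sparseSubsets (d + 1) k) : sourceSubset (d + m) d i ∉ boxes d m T := by
  intro h
  obtain ⟨j, hj, b, z, hbz, h⟩ := mem_boxes.1 h
  exact exchange_ne_sourceSubset_of_mem_boxMoves hm (le_of_mem_sparseSubsets hT hj) hi hbz h

lemma isAligned_insert_image_of_mem_boxes {d m k : ℕ} (hm : 2 ≤ m) (hk : k < m) {T B : Finset ℕ}
    (hT : T ∈ sparseSubsets (d + 1) k) (hB : B ∈ boxes d m T) :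
    IsAligned (d + m) (insert B (T.image (sourceSubset (d + m) d))) := by
  obtain ⟨i, hi, b, z, hbz, rfl⟩ := mem_boxes.1 hB
  have hid := le_of_mem_sparseSubsets hT hi
  have self_iff (b' z' : ℕ) := exchange_exchange_eq_self_iff (b' := b') (z' := z')
    (Finset.mem_inter.1 hbz).2
  refine isAligned_insert_box (isAligned_image_sourceSubset hm
    (fun i => le_of_mem_sparseSubsets hT) (mem_sparseSubsets.1 hT).2) hid hbz
    fun b' z' => ⟨fun h => ?_, fun h =>
      Finset.mem_image.2 ⟨i, hi, ((self_iff b' z').2 h).symm⟩⟩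
  obtain ⟨j, hj, h⟩ := Finset.mem_image.1 h
  by_cases ne : i = j
  · exact (self_iff b' z').1 (ne ▸ h.symm)
  · have two_le : 2 ≤ T.card := Finset.one_lt_card.2 ⟨i, hi, j, hj, ne⟩
    rw [(mem_sparseSubsets.1 hT).1.2] at two_le
    exact absurd h.symm
      (exchange_exchange_ne_sourceSubset (by omega) hid
          (lt_or_lt_of_mem_sparseSubsets hT hi hj ne) hbz)

lemma boxFamilies_subset_coSigFamilies {d m p : ℕ} (hm : 2 ≤ m) (hp : p < m) :
    boxFamilies d m p ⊆ coSigFamilies (d + m) d (p + 1) := by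
  refine Finset.image_subset_iff.2 fun ⟨T, B⟩ hx => ?_
  obtain ⟨hT, hB⟩ := Finset.mem_sigma.1 hx
  have notMem : B ∉ T.image (sourceSubset (d + m) d) := fun h => by
    obtain ⟨i, hi, rfl⟩ := Finset.mem_image.1 h
    exact sourceSubset_notMem_boxes hm (le_of_mem_sparseSubsets hT hi) hT hB
  have subset : B ∈ (Finset.Icc 1 (d + m)).powersetCard d := by
    obtain ⟨i, hi, b, z, hbz, rfl⟩ := mem_boxes.1 hB
    exact exchange_mem_powersetCard_of_mem_moves (le_of_mem_sparseSubsets hT hi)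
      (Finset.mem_inter.1 hbz).2
  refine mem_coSigFamilies.2
    ⟨Finset.insert_subset subset (image_sourceSubset_subset hT), ?_,
      isAligned_insert_image_of_mem_boxes hm hp hT hB⟩
  rw [Finset.card_insert_of_notMem notMem, card_image_sourceSubset (by omega) hT]

lemma exchange_exchange_mem_pair_iff {n b z b₁ z₁ b' z' : ℕ} {A : Finset ℕ}
    (hbz : (b, z) ∈ moves n A) (hbz₁ : (b₁, z₁) ∈ moves n A) (ne : (b, z) ≠ (b₁, z₁)) :
    exchange (exchange A b₁ z₁) b' z' ∈ ({exchange A b z, A} : Finset (Finset ℕ)) ↔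
      (b = b₁ ∧ b' = z₁ ∧ z' = z ∨ z = z₁ ∧ b' = b ∧ z' = b₁) ∨ b' = z₁ ∧ z' = b₁ := by
  rw [Finset.mem_insert, Finset.mem_singleton, exchange_exchange_eq_exchange_iff hbz₁ hbz ne,
    exchange_exchange_eq_self_iff hbz₁]

lemma neighborhood_pair (A : Finset ℕ) (b z b₁ z₁ : ℕ) : neighborhood A {(b, z), (b₁, z₁)} =
    insert (exchange A b₁ z₁) {exchange A b z, A} := by
  rw [neighborhood, Finset.image_insert, Finset.image_singleton]
  ext
  simp only [Finset.mem_insert, Finset.mem_singleton]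
  tauto

lemma mem_sparseSubsets_singleton {d i : ℕ} (hi : i ≤ d) : {i} ∈ sparseSubsets (d + 1) 1 :=
  mem_sparseSubsets.2 ⟨⟨Finset.singleton_subset_iff.2 (Finset.mem_range_succ_iff.2 hi),
    Finset.card_singleton i⟩, by simp⟩

lemma isAligned_neighborhood_pair {d m i b z b₁ z₁ : ℕ} (hm : 3 ≤ m) (hi : i ≤ d)
    (legal : {(b, z), (b₁, z₁)} ⊆ moves (d + m) (sourceSubset (d + m) d i))
    (shape : b = i ∧ z = i + 1 ∧
        (b₁ = i + m + 1 ∧ z₁ = i + m ∨ b₁ = i ∧ z₁ = i + 2 ∨ b₁ = i - 1 ∧ z₁ = i + 1) ∨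
      b = i + m + 1 ∧ z = i + m ∧
        (b₁ = i + m + 1 ∧ z₁ = i + m - 1 ∨ b₁ = i + m + 2 ∧ z₁ = i + m)) :
    IsAligned (d + m) (neighborhood (sourceSubset (d + m) d i) {(b, z), (b₁, z₁)}) := by
  rw [Finset.insert_subset_iff, Finset.singleton_subset_iff] at legal
  have ⟨hbz, hbz₁⟩ := legal
  rw [mem_moves_sourceSubset hi] at hbz hbz₁
  have hB : (b, z) ∈ boxMoves d m i := (mem_boxMoves hi).2 (by omega)
  have ne : (b, z) ≠ (b₁, z₁) := by rw [ne_eq, Prod.mk.injEq]; omega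
  have aligned := isAligned_insert_image_of_mem_boxes (by omega) (by omega)
    (mem_sparseSubsets_singleton hi) (mem_boxes.2 ⟨i, Finset.mem_singleton_self i, b, z, hB, rfl⟩)
  rw [Finset.image_singleton] at aligned
  rw [neighborhood_pair]
  refine isAligned_insert aligned fun b' hb' => ?_
  simp only [exchange_exchange_mem_pair_iff legal.1 legal.2 ne]
  simp only [Finset.mem_sdiff, mem_exchange, mem_sourceSubset, Finset.mem_Icc] at hb' ⊢
  by_cases h : b' ≤ i ∨ b' = z₁ ∧ b₁ < z₁
  · refine .inl fun z' hz' => ?_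
    rcases shape with ⟨rfl, rfl, ⟨rfl, rfl⟩ | ⟨rfl, rfl⟩ | ⟨rfl, rfl⟩⟩ |
      ⟨rfl, rfl, ⟨rfl, rfl⟩ | ⟨rfl, rfl⟩⟩ <;> omega
  · refine .inr fun z' hz' => ?_
    rcases shape with ⟨rfl, rfl, ⟨rfl, rfl⟩ | ⟨rfl, rfl⟩ | ⟨rfl, rfl⟩⟩ |
      ⟨rfl, rfl, ⟨rfl, rfl⟩ | ⟨rfl, rfl⟩⟩ <;> omega

lemma isAligned_neighborhood {d m i : ℕ} (hm : 3 ≤ m) (hi : i ≤ d) {E : Finset (ℕ × ℕ)}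
    (hE : E ∈ clusterMoves d m i) :
    IsAligned (d + m) (neighborhood (sourceSubset (d + m) d i) E) := by
  simp only [clusterMoves, Finset.mem_filter, Finset.mem_insert, Finset.mem_singleton] at hE
  obtain ⟨rfl | rfl | rfl | rfl | rfl, legal⟩ := hE <;>
    exact isAligned_neighborhood_pair hm hi legal (by omega)

lemma exchange_ne_sourceSubset_of_mem_clusterMoves {d m i j : ℕ} (hm : 3 ≤ m) (hi : i ≤ d)
    (hj : j ≤ d) {E : Finset (ℕ × ℕ)} (hE : E ∈ clusterMoves d m i) {e : ℕ × ℕ} (he : e ∈ E) :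
    exchange (sourceSubset (d + m) d i) e.1 e.2 ≠ sourceSubset (d + m) d j := by
  intro h
  obtain ⟨b, z⟩ := e
  have legal := (Finset.mem_filter.1 hE).2 he
  have adjacent := adjacent_of_exchange_sourceSubset_eq (by omega) hi hj legal h
  simp only [clusterMoves, Finset.mem_filter, Finset.mem_insert, Finset.mem_singleton] at hE
  obtain ⟨rfl | rfl | rfl | rfl | rfl, -⟩ := hE <;>
  · simp only [Finset.mem_insert, Finset.mem_singleton, Prod.mk.injEq] at he
    omega

lemma clusterFamilies_subset_coSigFamilies {d m : ℕ} (hm : 3 ≤ m) :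
    clusterFamilies d m ⊆ coSigFamilies (d + m) d 3 := by
  refine Finset.image_subset_iff.2 fun ⟨i, E⟩ hx => ?_
  obtain ⟨hi, hE⟩ := Finset.mem_sigma.1 hx
  replace hi := Finset.mem_range_succ_iff.1 hi
  have legal := (Finset.mem_filter.1 hE).2
  refine mem_coSigFamilies.2 ⟨neighborhood_subset_iff.2
    ⟨sourceSubset_mem_powersetCard hi,
      fun e he => exchange_mem_powersetCard_of_mem_moves hi (legal he)⟩, ?_,
      isAligned_neighborhood hm hi hE⟩
  rw [card_neighborhood legal, card_of_mem_clusterMoves (by omega) hE]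

lemma sourceIndices_image {d m k : ℕ} (hm : 1 ≤ m) {T : Finset ℕ}
    (hT : T ∈ sparseSubsets (d + 1) k) :
    sourceIndices d m (T.image (sourceSubset (d + m) d)) = T := by
  have subset := (mem_sparseSubsets.1 hT).1.1
  ext i
  rw [mem_sourceIndices, Finset.mem_image]
  refine ⟨fun ⟨hi, j, hj, h⟩ => ?_, fun hi => ⟨le_of_mem_sparseSubsets hT hi, i, hi, rfl⟩⟩
  rwa [← sourceSubset_injOn hm (subset hj) (Finset.mem_range_succ_iff.2 hi) h]

lemma sourceIndices_insert {d m : ℕ} {B : Finset ℕ} {P : Finset (Finset ℕ)}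
    (hB : ∀ i ≤ d, sourceSubset (d + m) d i ≠ B) :
    sourceIndices d m (insert B P) = sourceIndices d m P := by
  ext i
  rw [mem_sourceIndices, mem_sourceIndices, Finset.mem_insert]
  exact and_congr_right fun hi => or_iff_right (hB i hi)

lemma sourceIndices_insert_image {d m k : ℕ} (hm : 2 ≤ m) {T B : Finset ℕ}
    (hT : T ∈ sparseSubsets (d + 1) k) (hB : B ∈ boxes d m T) :
    sourceIndices d m (insert B (T.image (sourceSubset (d + m) d))) = T := by
  rw [sourceIndices_insert, sourceIndices_image (by omega) hT]
  exact fun i hi h => sourceSubset_notMem_boxes hm hi hT (h ▸ hB)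

lemma sourceIndices_neighborhood {d m i : ℕ} (hm : 3 ≤ m) (hi : i ≤ d) {E : Finset (ℕ × ℕ)}
    (hE : E ∈ clusterMoves d m i) :
    sourceIndices d m (neighborhood (sourceSubset (d + m) d i) E) = {i} := by
  ext j
  rw [mem_sourceIndices, neighborhood, Finset.mem_insert, Finset.mem_image, Finset.mem_singleton]
  refine ⟨fun ⟨hj, h⟩ => ?_, fun h => ⟨h ▸ hi, .inl (h ▸ rfl)⟩⟩
  rcases h with h | ⟨e, he, h⟩
  · exact sourceSubset_injOn (by omega) (Finset.mem_range_succ_iff.2 hj)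
      (Finset.mem_range_succ_iff.2 hi) h
  · exact absurd h (exchange_ne_sourceSubset_of_mem_clusterMoves hm hi hj hE he)

lemma card_sourceIndices_of_mem_sourceFamilies {d m p : ℕ} (hm : 1 ≤ m) {P : Finset (Finset ℕ)}
    (hP : P ∈ sourceFamilies d m p) : (sourceIndices d m P).card = p := by
  obtain ⟨T, hT, rfl⟩ := Finset.mem_image.1 hP
  rw [sourceIndices_image hm hT, (mem_sparseSubsets.1 hT).1.2]

lemma card_sourceIndices_of_mem_boxFamilies {d m p : ℕ} (hm : 2 ≤ m) {P : Finset (Finset ℕ)}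
    (hP : P ∈ boxFamilies d m p) : (sourceIndices d m P).card = p := by
  obtain ⟨⟨T, B⟩, hx, rfl⟩ := Finset.mem_image.1 hP
  obtain ⟨hT, hB⟩ := Finset.mem_sigma.1 hx
  rw [sourceIndices_insert_image hm hT hB, (mem_sparseSubsets.1 hT).1.2]

lemma card_sourceIndices_of_mem_clusterFamilies {d m : ℕ} (hm : 3 ≤ m) {P : Finset (Finset ℕ)}
    (hP : P ∈ clusterFamilies d m) : (sourceIndices d m P).card = 1 := by
  obtain ⟨⟨i, E⟩, hx, rfl⟩ := Finset.mem_image.1 hP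
  obtain ⟨hi, hE⟩ := Finset.mem_sigma.1 hx
  rw [sourceIndices_neighborhood hm (Finset.mem_range_succ_iff.1 hi) hE, Finset.card_singleton]

lemma card_of_mem_clusterFamilies {d m : ℕ} (hm : 1 ≤ m) {P : Finset (Finset ℕ)}
    (hP : P ∈ clusterFamilies d m) : P.card = 3 := by
  obtain ⟨⟨i, E⟩, hx, rfl⟩ := Finset.mem_image.1 hP
  have hE := (Finset.mem_sigma.1 hx).2
  rw [card_neighborhood (Finset.mem_filter.1 hE).2, card_of_mem_clusterMoves hm hE]

lemma coSigFamilies_two {d m : ℕ} (hm : 2 ≤ m) :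
    coSigFamilies (d + m) d 2 = sourceFamilies d m 2 ∪ boxFamilies d m 1 := by
  refine (Finset.union_subset (sourceFamilies_subset_coSigFamilies hm 2)
    (boxFamilies_subset_coSigFamilies hm (by omega))).antisymm' fun P hP => ?_
  have not_cluster : P ∉ clusterFamilies d m := fun h => by
    have := card_of_mem_clusterFamilies (by omega) h
    have := (mem_coSigFamilies.1 hP).2.1
    omega
  rcases mem_families_of_mem_coSigFamilies (by omega) (by omega) hm hP with h | h | h
  · exact Finset.mem_union_left _ h
  · exact Finset.mem_union_right _ h
  · exact absurd h not_cluster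

lemma coSigFamilies_three {d m : ℕ} (hm : 3 ≤ m) : coSigFamilies (d + m) d 3 =
    sourceFamilies d m 3 ∪ (boxFamilies d m 2 ∪ clusterFamilies d m) := by
  refine (Finset.union_subset (sourceFamilies_subset_coSigFamilies (by omega) 3)
    (Finset.union_subset (boxFamilies_subset_coSigFamilies (by omega) hm)
      (clusterFamilies_subset_coSigFamilies hm))).antisymm' fun P hP => ?_
  rw [Finset.mem_union, Finset.mem_union]
  exact mem_families_of_mem_coSigFamilies (by omega) le_rfl hm hP

lemma card_coSigFamilies_two {d m : ℕ} (hm : 2 ≤ m) :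
    (coSigFamilies (d + m) d 2).card = (sourceFamilies d m 2).card + (boxFamilies d m 1).card := by
  rw [coSigFamilies_two hm, Finset.card_union_of_disjoint]
  refine Finset.disjoint_left.2 fun P source box => ?_
  have := card_sourceIndices_of_mem_sourceFamilies (by omega) source
  have := card_sourceIndices_of_mem_boxFamilies hm box
  omega

lemma card_coSigFamilies_three {d m : ℕ} (hm : 3 ≤ m) : (coSigFamilies (d + m) d 3).card =
    (sourceFamilies d m 3).card + ((boxFamilies d m 2).card + (clusterFamilies d m).card) := by
  rw [coSigFamilies_three hm, Finset.card_union_of_disjoint, Finset.card_union_of_disjoint]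
  · refine Finset.disjoint_left.2 fun P box cluster => ?_
    have := card_sourceIndices_of_mem_boxFamilies (by omega) box
    have := card_sourceIndices_of_mem_clusterFamilies hm cluster
    omega
  · refine Finset.disjoint_left.2 fun P source other => ?_
    have := card_sourceIndices_of_mem_sourceFamilies (by omega) source
    rcases Finset.mem_union.1 other with box | cluster
    · have := card_sourceIndices_of_mem_boxFamilies (by omega) box
      omega
    · have := card_sourceIndices_of_mem_clusterFamilies hm cluster
      omega

lemma filter_notMem_sparseSubsets (n k : ℕ) :
    {T ∈ sparseSubsets (n + 1) k | n ∉ T} = sparseSubsets n k := by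
  ext T
  simp only [Finset.mem_filter, mem_sparseSubsets, Finset.range_add_one]
  constructor
  · rintro ⟨⟨⟨subset, card⟩, sparse⟩, notMem⟩
    exact ⟨⟨(Finset.subset_insert_iff_of_notMem notMem).1 subset, card⟩, sparse⟩
  · rintro ⟨⟨subset, card⟩, sparse⟩
    exact ⟨⟨⟨subset.trans (Finset.subset_insert _ _), card⟩, sparse⟩,
      fun h => Finset.notMem_range_self (subset h)⟩

lemma card_filter_mem_sparseSubsets (n k : ℕ) :
    {T ∈ sparseSubsets (n + 2) (k + 1) | n + 1 ∈ T}.card = (sparseSubsets n k).card := by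
  refine Finset.card_nbij' (·.erase (n + 1)) (insert (n + 1)) (fun T hT => ?_) (fun T hT => ?_)
    (fun T hT => Finset.insert_erase (Finset.mem_filter.1 hT).2) (fun T hT => ?_)
  · simp only [Finset.coe_filter, mem_sparseSubsets, Finset.mem_coe, Finset.subset_iff,
      Finset.mem_range, Finset.mem_erase] at hT ⊢
    obtain ⟨⟨⟨subset, card⟩, sparse⟩, mem⟩ := hT
    refine ⟨⟨fun x hx => ?_, ?_⟩, fun x hx hx' => sparse x hx.2 hx'.2⟩
    · have := subset hx.2
      have : x ≠ n := fun h => sparse x hx.2 (h ▸ mem)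
      omega
    · rw [Finset.card_erase_of_mem mem, card, Nat.add_sub_cancel]
  · simp only [Finset.mem_coe, Finset.mem_filter, mem_sparseSubsets, Finset.subset_iff,
      Finset.mem_range, Finset.mem_insert] at hT ⊢
    obtain ⟨⟨subset, card⟩, sparse⟩ := hT
    refine ⟨⟨⟨fun x hx => ?_, ?_⟩, fun x hx hx' => ?_⟩, .inl trivial⟩
    · grind
    · rw [Finset.card_insert_of_notMem fun h => absurd (subset h) (by omega), card]
    · grind
  · refine Finset.erase_insert fun h => ?_
    have := (mem_sparseSubsets.1 hT).1.1 h
    rw [Finset.mem_range] at this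
    omega

lemma card_sparseSubsets_add_two (n k : ℕ) : (sparseSubsets (n + 2) (k + 1)).card =
    (sparseSubsets n k).card + (sparseSubsets (n + 1) (k + 1)).card := by
  rw [← card_filter_mem_sparseSubsets n k, ← filter_notMem_sparseSubsets (n + 1) (k + 1),
    Finset.card_filter_add_card_filter_not]

lemma card_sparseSubsets_zero_right (n : ℕ) : (sparseSubsets n 0).card = 1 := by
  rw [sparseSubsets, Finset.powersetCard_zero, Finset.filter_singleton, if_pos (by simp),
    Finset.card_singleton]

lemma card_sparseSubsets_of_lt {n k : ℕ} (h : n < k) : (sparseSubsets n k).card = 0 := by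
  rw [sparseSubsets, Finset.powersetCard_eq_empty.2 (by rwa [Finset.card_range]),
    Finset.filter_empty, Finset.card_empty]

lemma card_sparseSubsets (n k : ℕ) : (sparseSubsets n k).card = (n + 1 - k).choose k := by
  induction n using Nat.twoStepInduction generalizing k with
  | zero =>
    rcases k with _ | k
    · rw [card_sparseSubsets_zero_right, Nat.choose_zero_right]
    · rw [card_sparseSubsets_of_lt k.succ_pos, Nat.choose_eq_zero_of_lt (by omega)]
  | one =>
    rcases k with _ | _ | k
    · rw [card_sparseSubsets_zero_right, Nat.choose_zero_right]
    · rfl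
    · rw [card_sparseSubsets_of_lt (by omega), Nat.choose_eq_zero_of_lt (by omega)]
  | more n ih ih' =>
    rcases k with _ | k
    · rw [card_sparseSubsets_zero_right, Nat.choose_zero_right]
    rw [card_sparseSubsets_add_two, ih, ih']
    rcases le_or_gt k (n + 1) with le | lt
    · rw [show n + 2 + 1 - (k + 1) = n + 1 - k + 1 by omega, Nat.choose_succ_succ,
        Nat.add_sub_add_right]
    · rw [Nat.choose_eq_zero_of_lt (by omega), Nat.choose_eq_zero_of_lt (by omega),
        Nat.choose_eq_zero_of_lt (by omega)]

lemma card_filter_zero_mem_sparseSubsets (n k : ℕ) :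
    {T ∈ sparseSubsets (n + 1) k | 0 ∈ T}.card = {T ∈ sparseSubsets (n + 1) k | n ∈ T}.card := by
  have reflect {T : Finset ℕ} (hT : T ∈ sparseSubsets (n + 1) k) :
      T.image (n - ·) ∈ sparseSubsets (n + 1) k ∧ (T.image (n - ·)).image (n - ·) = T := by
    simp only [mem_sparseSubsets, Finset.subset_iff, Finset.mem_range] at hT
    obtain ⟨⟨subset, rfl⟩, sparse⟩ := hT
    have injOn : Set.InjOn (n - ·) (T : Set ℕ) := fun x hx y hy h => by
      have := subset hx
      have := subset hy
      grind
    refine ⟨mem_sparseSubsets.2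
      ⟨⟨fun x hx => ?_, Finset.card_image_of_injOn injOn⟩, fun x hx hx' => ?_⟩, ?_⟩
    · obtain ⟨y, -, rfl⟩ := Finset.mem_image.1 hx
      exact Finset.mem_range.2 (by omega)
    · obtain ⟨y, hy, rfl⟩ := Finset.mem_image.1 hx
      obtain ⟨y', hy', h⟩ := Finset.mem_image.1 hx'
      have := subset hy
      have := subset hy'
      exact sparse y' hy' ((show y' + 1 = y by omega) ▸ hy)
    · rw [Finset.image_image]
      refine (Finset.image_congr fun x hx => ?_).trans Finset.image_id
      have := subset hx
      grind
  refine Finset.card_nbij' (·.image (n - ·)) (·.image (n - ·)) ?_ ?_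
    (fun T hT => (reflect (Finset.mem_filter.1 hT).1).2)
    (fun T hT => (reflect (Finset.mem_filter.1 hT).1).2)
  all_goals
    intro T hT
    obtain ⟨hT, mem⟩ := Finset.mem_filter.1 hT
    refine Finset.mem_filter.2 ⟨(reflect hT).1, Finset.mem_image.2 ⟨_, mem, ?_⟩⟩
    simp

lemma card_sourceFamilies {d m : ℕ} (hm : 1 ≤ m) (p : ℕ) :
    (sourceFamilies d m p).card = (d + 2 - p).choose p := by
  rw [sourceFamilies, Finset.card_image_of_injOn, card_sparseSubsets]
  intro T hT T' hT' h
  simpa only [sourceIndices_image hm hT, sourceIndices_image hm hT'] using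
    congrArg (sourceIndices d m) h

lemma card_boxMoves {d m i : ℕ} (hm : 1 ≤ m) (hi : i ≤ d) :
    (boxMoves d m i).card + ((if i = 0 then 1 else 0) + (if i = d then 1 else 0)) = 2 := by
  have legal_left : (i, i + 1) ∈ moves (d + m) (sourceSubset (d + m) d i) ↔ i ≠ 0 := by
    rw [mem_moves_sourceSubset hi]
    omega
  have legal_right : (i + m + 1, i + m) ∈ moves (d + m) (sourceSubset (d + m) d i) ↔ i ≠ d := by
    rw [mem_moves_sourceSubset hi]
    omega
  have ne : (i, i + 1) ≠ (i + m + 1, i + m) := fun h => by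
    rw [Prod.mk.injEq] at h
    omega
  rw [boxMoves, ← Finset.filter_mem_eq_inter, Finset.card_filter, Finset.sum_pair ne]
  simp only [legal_left, legal_right, ite_not]
  split_ifs <;> rfl

lemma card_image_boxMoves (d m i : ℕ) :
    ((boxMoves d m i).image fun e => exchange (sourceSubset (d + m) d i) e.1 e.2).card =
      (boxMoves d m i).card :=
  Finset.card_image_of_injOn ((exchange_injOn _ _).mono Finset.inter_subset_right)

lemma card_boxes {d m k : ℕ} (hk : k < m) {T : Finset ℕ} (hT : T ∈ sparseSubsets (d + 1) k) :
    (boxes d m T).card = ∑ i ∈ T, (boxMoves d m i).card := by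
  rw [boxes, Finset.card_biUnion]
  · exact Finset.sum_congr rfl fun i _ => card_image_boxMoves d m i
  · intro i hi j hj ne
    refine Finset.disjoint_left.2 fun B hB hB' => ?_
    obtain ⟨⟨b, z⟩, hbz, rfl⟩ := Finset.mem_image.1 hB
    obtain ⟨⟨b', z'⟩, hbz', h⟩ := Finset.mem_image.1 hB'
    have two_le : 2 ≤ T.card := Finset.one_lt_card.2 ⟨i, hi, j, hj, ne⟩
    rw [(mem_sparseSubsets.1 hT).1.2] at two_le
    have back := (exchange_exchange_eq_self_iff (Finset.mem_inter.1 hbz).2).2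
      ⟨rfl, rfl⟩
    exact exchange_exchange_ne_sourceSubset (by omega) (le_of_mem_sparseSubsets hT hj)
      (lt_or_lt_of_mem_sparseSubsets hT hj hi ne.symm) hbz'
      ((congrArg (exchange · z b) h).trans back)

lemma card_boxFamilies_eq_sum {d m k : ℕ} (hm : 2 ≤ m) (hk : k < m) :
    (boxFamilies d m k).card =
      ∑ T ∈ sparseSubsets (d + 1) k, ∑ i ∈ T, (boxMoves d m i).card := by
  rw [boxFamilies, Finset.card_image_of_injOn, Finset.card_sigma]
  · exact Finset.sum_congr rfl fun T hT => card_boxes hk hT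
  · rintro ⟨T, B⟩ hx ⟨T', B'⟩ hx' h
    obtain ⟨hT, hB⟩ := Finset.mem_sigma.1 hx
    obtain ⟨hT', hB'⟩ := Finset.mem_sigma.1 hx'
    have T_eq : T = T' := by
      simpa only [sourceIndices_insert_image hm hT hB, sourceIndices_insert_image hm hT' hB'] using
        congrArg (sourceIndices d m) h
    subst T_eq
    have notMem : B ∉ T.image (sourceSubset (d + m) d) := fun mem => by
      obtain ⟨i, hi, rfl⟩ := Finset.mem_image.1 mem
      exact sourceSubset_notMem_boxes hm (le_of_mem_sparseSubsets hT hi) hT hB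
    have mem : B ∈ insert B' (T.image (sourceSubset (d + m) d)) := by
      rw [← show insert B _ = insert B' _ from h]
      exact Finset.mem_insert_self B _
    rw [(Finset.mem_insert.1 mem).resolve_right notMem]

lemma card_boxFamilies {e m k : ℕ} (hm : 2 ≤ m) (hk : k + 1 < m) :
    (boxFamilies (e + 1) m (k + 1)).card + 2 * (e + 1 - k).choose k =
      2 * (k + 1) * (e + 2 - k).choose (k + 1) := by
  have card_top : {T ∈ sparseSubsets (e + 2) (k + 1) | e + 1 ∈ T}.card = (e + 1 - k).choose k := by
    rw [card_filter_mem_sparseSubsets, card_sparseSubsets]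
  have sum_boxMoves {T : Finset ℕ} (hT : T ∈ sparseSubsets (e + 2) (k + 1)) :
      ∑ i ∈ T, (boxMoves (e + 1) m i).card +
        ((if 0 ∈ T then 1 else 0) + (if e + 1 ∈ T then 1 else 0)) = 2 * (k + 1) := by
    rw [← Finset.sum_ite_eq' T 0 fun _ => 1, ← Finset.sum_ite_eq' T (e + 1) fun _ => 1,
      ← Finset.sum_add_distrib, ← Finset.sum_add_distrib, Finset.sum_congr rfl fun i hi =>
        card_boxMoves (by omega) (le_of_mem_sparseSubsets hT hi), Finset.sum_const,
      (mem_sparseSubsets.1 hT).1.2, smul_eq_mul, mul_comm]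
  calc (boxFamilies (e + 1) m (k + 1)).card + 2 * (e + 1 - k).choose k
    _ = ∑ T ∈ sparseSubsets (e + 2) (k + 1), (∑ i ∈ T, (boxMoves (e + 1) m i).card +
          ((if 0 ∈ T then 1 else 0) + (if e + 1 ∈ T then 1 else 0))) := by
      rw [Finset.sum_add_distrib, Finset.sum_add_distrib, ← Finset.card_filter,
        ← Finset.card_filter, card_filter_zero_mem_sparseSubsets, card_top, ← two_mul,
        card_boxFamilies_eq_sum hm hk]
    _ = 2 * (k + 1) * (e + 2 - k).choose (k + 1) := by
      rw [Finset.sum_congr rfl fun T hT => sum_boxMoves hT, Finset.sum_const, card_sparseSubsets,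
        smul_eq_mul, mul_comm, Nat.add_sub_add_right]

lemma card_clusterMoves {d m i : ℕ} (hm : 2 ≤ m) (hi : i ≤ d) : (clusterMoves d m i).card =
    (if i ∈ Finset.Ico 1 d then 1 else 0) + ((if i ∈ Finset.Ico 1 (d + 1) then 1 else 0) +
      ((if i ∈ Finset.Ico 2 (d + 1) then 1 else 0) + ((if i ∈ Finset.Ico 0 d then 1 else 0) +
        (if i ∈ Finset.Ico 0 (d - 1) then 1 else 0)))) := by
  rw [clusterMoves, Finset.card_filter, Finset.sum_insert, Finset.sum_insert, Finset.sum_insert,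
    Finset.sum_insert, Finset.sum_singleton]
  · simp only [Finset.insert_subset_iff, Finset.singleton_subset_iff, mem_moves_sourceSubset hi,
      Finset.mem_Ico]
    refine congrArg₂ _ (if_congr (by omega) rfl rfl) (congrArg₂ _ (if_congr (by omega) rfl rfl)
      (congrArg₂ _ (if_congr (by omega) rfl rfl) (congrArg₂ _ (if_congr (by omega) rfl rfl)
        (if_congr (by omega) rfl rfl))))
  all_goals
    simp only [Finset.mem_insert, Finset.mem_singleton, ← Finset.coe_inj, Finset.coe_pair,
      Set.pair_eq_pair_iff, Prod.mk.injEq]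
    omega

lemma sum_ite_mem_Ico {n a b : ℕ} (hb : b ≤ n) :
    ∑ i ∈ Finset.range n, (if i ∈ Finset.Ico a b then 1 else 0) = b - a := by
  rw [← Finset.card_filter, Finset.filter_mem_eq_inter, Finset.inter_eq_right.2, Nat.card_Ico]
  exact fun i hi => Finset.mem_range.2 ((Finset.mem_Ico.1 hi).2.trans_le hb)

lemma card_clusterFamilies_eq_sum {d m : ℕ} (hm : 3 ≤ m) :
    (clusterFamilies d m).card = ∑ i ∈ Finset.range (d + 1), (clusterMoves d m i).card := by
  rw [clusterFamilies, Finset.card_image_of_injOn, Finset.card_sigma]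
  rintro ⟨i, E⟩ hx ⟨i', E'⟩ hx' h
  obtain ⟨hi, hE⟩ := Finset.mem_sigma.1 hx
  obtain ⟨hi', hE'⟩ := Finset.mem_sigma.1 hx'
  have i_eq : i = i' := by
    simpa only [sourceIndices_neighborhood hm (Finset.mem_range_succ_iff.1 hi) hE,
      sourceIndices_neighborhood hm (Finset.mem_range_succ_iff.1 hi') hE', Finset.singleton_inj]
      using congrArg (sourceIndices d m) h
  subst i_eq
  have E_eq := neighborhood_injOn _ _ (Finset.mem_filter.1 hE).2 (Finset.mem_filter.1 hE').2 h
  rw [show E = E' from E_eq]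

lemma card_clusterFamilies {d m : ℕ} (hd : 1 ≤ d) (hm : 3 ≤ m) :
    (clusterFamilies d m).card = 5 * d - 3 := by
  rw [card_clusterFamilies_eq_sum hm, Finset.sum_congr rfl fun i hi =>
    card_clusterMoves (by omega) (Finset.mem_range_succ_iff.1 hi)]
  simp only [Finset.sum_add_distrib]
  rw [sum_ite_mem_Ico, sum_ite_mem_Ico, sum_ite_mem_Ico, sum_ite_mem_Ico, sum_ite_mem_Ico]
  all_goals omega

lemma factorial_mul_choose_eq_prod_range (R : Type*) [CommRing R] (n k : ℕ) :
    (k.factorial * n.choose k : R) = ∏ j ∈ Finset.range k, ((n : R) - j) := by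
  rw [← descPochhammer_eval_eq_prod_range, descPochhammer_eval_eq_descFactorial,
    Nat.descFactorial_eq_factorial_mul_choose, Nat.cast_mul]

lemma two_mul_card_coSigFamilies_two {d m : ℕ} (hd : 1 ≤ d) (hm : 2 ≤ m) :
    2 * ((coSigFamilies (d + m) d 2).card : ℤ) = d ^ 2 + 3 * d := by
  obtain ⟨e, rfl⟩ := Nat.exists_eq_add_of_le' hd
  have choose_two := factorial_mul_choose_eq_prod_range ℤ (e + 1) 2
  have card_box := card_boxFamilies (e := e) (k := 0) hm hm
  rw [card_coSigFamilies_two hm, card_sourceFamilies (by omega)]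
  simp only [Nat.factorial, Finset.prod_range_succ, Finset.prod_range_zero, Nat.choose_zero_right,
    Nat.choose_one_right, Nat.reduceSubDiff, Nat.sub_zero, zero_add] at choose_two card_box ⊢
  zify at card_box
  push_cast at choose_two ⊢
  linarith

lemma six_mul_card_coSigFamilies_three {d m : ℕ} (hd : 1 ≤ d) (hm : 3 ≤ m) :
    6 * ((coSigFamilies (d + m) d 3).card : ℤ) = d ^ 3 + 6 * d ^ 2 + 17 * d - 12 := by
  obtain ⟨e, rfl⟩ := Nat.exists_eq_add_of_le' hd
  have choose_two := factorial_mul_choose_eq_prod_range ℤ (e + 1) 2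
  have choose_three := factorial_mul_choose_eq_prod_range ℤ e 3
  have card_box := card_boxFamilies (e := e) (k := 1) (by omega) hm
  have card_cluster : (clusterFamilies (e + 1) m).card = 5 * e + 2 := card_clusterFamilies hd hm
  rw [card_coSigFamilies_three hm, card_sourceFamilies (by omega), card_cluster]
  simp only [Nat.factorial, Finset.prod_range_succ, Finset.prod_range_zero, Nat.add_sub_cancel,
    Nat.choose_one_right, Nat.reduceSubDiff, Nat.reduceAdd,
    add_assoc] at choose_two choose_three card_box ⊢
  zify at card_box
  push_cast at choose_two choose_three ⊢
  linarith

/-- **Lemma.** `P_{d,2} = d²/2 + 3d/2` and `P_{d,3} = d³/6 + d² + 17d/6 - 2`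
(stated denominator-free over `ℤ`). -/
theorem statement17 :
    (∀ d n : ℕ, 1 ≤ d → d + 2 ≤ n →
      2 * ((coSigSet n d 2).ncard : ℤ) = (d : ℤ) ^ 2 + 3 * d) ∧
    (∀ d n : ℕ, 1 ≤ d → d + 3 ≤ n →
      6 * ((coSigSet n d 3).ncard : ℤ) = (d : ℤ) ^ 3 + 6 * d ^ 2 + 17 * d - 12) := by
  constructor
  · intro d n hd hn
    obtain ⟨m, rfl⟩ := Nat.exists_eq_add_of_le (Nat.le_of_add_right_le hn)
    rw [ncard_coSigSet, two_mul_card_coSigFamilies_two hd (Nat.add_le_add_iff_left.1 hn)]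
  · intro d n hd hn
    obtain ⟨m, rfl⟩ := Nat.exists_eq_add_of_le (Nat.le_of_add_right_le hn)
    rw [ncard_coSigSet, six_mul_card_coSigFamilies_three hd (Nat.add_le_add_iff_left.1 hn)]
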